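/- Let h be a nonnegative integer, let G be the universal outerplanar graph with height h, let T be the weak dual tree of G, let r be the h-center of T, and let x¹, x², x³ be the three vertices of G incident to the face r. Let H be a maximal outerplanar graph on at least three vertices whose weak dual tree has an h-center r_H, and let x_H¹, x_H², x_H³ be the three vertices of H incident to the face r_H. Then there exists a subgraph embedding φ from H to G (an injection φ : V(H) → V(G) with φ(u)φ(v) ∈ E(G) for every uv ∈ E(H)) such that φ(x_Hⁱ) = xⁱ for all i ∈ {1,2,3}. -/

import Mathlib

open SimpleGraph

section Defs

variable {V W : Type*}

/-- An `H`-minor in `G` given by branch sets `μ`: the branch sets are pairwise disjoint,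
each induces a connected subgraph of `G`, and every edge of `H` is realized by an edge of `G`
between the corresponding branch sets. -/
def IsMinorMap (G : SimpleGraph V) (H : SimpleGraph W) (μ : W → Set V) : Prop :=
  (∀ w, (G.induce (μ w)).Connected) ∧
  (Pairwise fun w₁ w₂ => Disjoint (μ w₁) (μ w₂)) ∧
  (∀ ⦃w₁ w₂⦄, H.Adj w₁ w₂ → ∃ a ∈ μ w₁, ∃ b ∈ μ w₂, G.Adj a b)

/-- The apex graph `H⁺`: a new vertex (`none`) joined to every vertex of `H`. -/
def apexGraph (H : SimpleGraph W) : SimpleGraph (Option W) :=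
  SimpleGraph.fromRel fun a b =>
    a = none ∨ ∃ u v, a = some u ∧ b = some v ∧ H.Adj u v

/-- The set `ω_{[s]}` of the first `s` vertices of the ordering `ω`. -/
def prevSet {t : ℕ} (ω : Fin t ≃ V) (s : ℕ) : Set V := ω '' {i | (i : ℕ) < s}

/-- The neighbours of the vertex `ω s` among the earlier vertices `ω_{[s]}`. -/
def nbrs (H : SimpleGraph V) {t : ℕ} (ω : Fin t ≃ V) (s : Fin t) : Set V :=
  {v | v ∈ prevSet ω (s : ℕ) ∧ H.Adj (ω s) v}

/-- A recursive ordering: every vertex has at most two neighbours among the earlier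
vertices, and if it has exactly two then those two are adjacent. -/
def IsRecursiveOrdering (H : SimpleGraph V) {t : ℕ} (ω : Fin t ≃ V) : Prop :=
  ∀ s : Fin t, (nbrs H ω s).ncard ≤ 2 ∧
    ∀ a ∈ nbrs H ω s, ∀ b ∈ nbrs H ω s, a ≠ b → H.Adj a b

/-- The graph `H[S]/ab` obtained from the induced subgraph on `S` by contracting the
edge `ab` (the vertex `b` is merged into `a`). -/
def contractOn (H : SimpleGraph V) (S : Set V) (a b : V) :
    SimpleGraph ↥(S \ {b}) :=
  SimpleGraph.fromRel fun x y =>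
    H.Adj (x : V) (y : V) ∨ ((x : V) = a ∧ H.Adj b (y : V)) ∨
      ((y : V) = a ∧ H.Adj (x : V) b)

variable [Fintype V]

/-- A contractible ordering of `H`. -/
def IsContractibleOrdering (H : SimpleGraph V)
    (Ω : Set (Fin (Fintype.card V) ≃ V)) : Prop :=
  Ω.Nonempty ∧ (∀ ω ∈ Ω, IsRecursiveOrdering H ω) ∧
    ∀ ω ∈ Ω, ∀ s : Fin (Fintype.card V), ∀ a ∈ nbrs H ω s, ∀ b ∈ nbrs H ω s, a ≠ b →
      ∃ ω' ∈ Ω,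
        Nonempty ((H.induce (prevSet ω' ((s : ℕ) - 1))) ≃g
          contractOn H (prevSet ω (s : ℕ)) a b)

/-- A graph is contractibly orderable if it admits a contractible ordering. -/
def ContractiblyOrderable (H : SimpleGraph V) : Prop :=
  ∃ Ω, IsContractibleOrdering H Ω

end Defs
attribute [local instance] Classical.propDecidable

section OP

variable {V U : Type*}

/-- A cactus: a connected graph in which every block is an edge or a cycle; equivalently,
a connected graph in which any two cycles sharing an edge have the same edge set. -/
def IsCactus (G : SimpleGraph V) : Prop :=
  G.Connected ∧
    ∀ (u v : V) (c₁ : G.Walk u u) (c₂ : G.Walk v v), c₁.IsCycle → c₂.IsCycle →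
      ∀ e, e ∈ c₁.edges → e ∈ c₂.edges → ∀ e', e' ∈ c₁.edges ↔ e' ∈ c₂.edges

/-- Outerplanar graphs, characterized by excluded minors `K₄` and `K_{2,3}`. -/
def Outerplanar (G : SimpleGraph V) : Prop :=
  (¬ ∃ μ : Fin 4 → Set V, IsMinorMap G (completeGraph (Fin 4)) μ) ∧
  (¬ ∃ μ : (Fin 2 ⊕ Fin 3) → Set V, IsMinorMap G (completeBipartiteGraph (Fin 2) (Fin 3)) μ)

/-- A maximal outerplanar graph: outerplanar, and adding any edge destroys outerplanarity. -/
def MaximalOuterplanar (G : SimpleGraph V) : Prop :=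
  Outerplanar G ∧ ∀ G' : SimpleGraph V, G < G' → ¬ Outerplanar G'

/-- The weak dual of a maximal outerplanar graph: vertices are the triangles (which are
exactly the bounded faces), two triangles being adjacent when they share an edge. -/
def weakDual [DecidableEq V] (G : SimpleGraph V) :
    SimpleGraph {s : Finset V // G.IsNClique 3 s} :=
  SimpleGraph.fromRel fun s t => ((s : Finset V) ∩ (t : Finset V)).card = 2

/-- A (nonempty) path, as a graph: a tree with maximum degree at most two. -/
def IsPathTree (T : SimpleGraph U) : Prop :=
  T.IsTree ∧ ∀ v : U, (T.neighborSet v).ncard ≤ 2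

/-- A cubic tree: a one-vertex tree, or a tree all of whose degrees are `1` or `3`. -/
def IsCubicTree (T : SimpleGraph U) [Fintype U] : Prop :=
  T.IsTree ∧ (Fintype.card U = 1 ∨
    ∀ v : U, (T.neighborSet v).ncard = 1 ∨ (T.neighborSet v).ncard = 3)

/-- The complete cubic tree with height `h`: a cubic tree with a vertex `r` such that every
path from `r` to a vertex of degree at most one has exactly `h` edges. -/
def IsCompleteCubicTree (T : SimpleGraph U) [Fintype U] (h : ℕ) : Prop :=
  IsCubicTree T ∧ ∃ r : U, ∀ v : U, (T.neighborSet v).ncard ≤ 1 → T.dist r v = h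

/-- A complete binary tree with height `h ≥ 1` and root `r`: obtained from a complete cubic
tree of height `h` with `h`-center `r` by deleting one component of `T′∖r`; equivalently the
root has degree `2`, all other degrees are `1` or `3`, and all leaves are at distance exactly
`h` from `r`. -/
def IsCompleteBinaryTree (T : SimpleGraph U) (r : U) (h : ℕ) : Prop :=
  T.IsTree ∧ 1 ≤ h ∧ (T.neighborSet r).ncard = 2 ∧
    (∀ v : U, v ≠ r → (T.neighborSet v).ncard = 1 ∨ (T.neighborSet v).ncard = 3) ∧
    ∀ v : U, (T.neighborSet v).ncard = 1 → T.dist r v = h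

end OP

/-- `r` is an `h`-center of `T`: every vertex is joined to `r` by a path with at most `h`
edges. -/
def IsHCenter {U : Type*} (T : SimpleGraph U) (h : ℕ) (r : U) : Prop :=
  ∀ v : U, T.Reachable r v ∧ T.dist r v ≤ h



section Part1
variable {V : Type*} {G : SimpleGraph V}

/-- `p` is a placement of the vertices on a line without crossing edges. -/
def NC (G : SimpleGraph V) (p : V → ℕ) : Prop :=
  Function.Injective p ∧ ∀ a b c d, G.Adj a c → G.Adj b d →
    p a < p b → p b < p c → p c < p d → False

lemma conn_boundary {X : Set V} (hX : (G.induce X).Connected) (P : V → Prop)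
    {a c : V} (ha : a ∈ X) (hc : c ∈ X) (hPa : P a) (hPc : ¬ P c) :
    ∃ x ∈ X, ∃ y ∈ X, G.Adj x y ∧ P x ∧ ¬ P y := by
  obtain ⟨w⟩ := hX.preconnected ⟨a, ha⟩ ⟨c, hc⟩
  obtain ⟨d, -, h1, h2⟩ := w.exists_boundary_dart {x | P x.1} hPa hPc
  exact ⟨d.fst, d.fst.2, d.snd, d.snd.2, d.adj, h1, h2⟩

lemma conn_union {X Y : Set V} (hX : (G.induce X).Connected) (hY : (G.induce Y).Connected)
    {a b : V} (ha : a ∈ X) (hb : b ∈ Y) (hab : G.Adj a b) : (G.induce (X ∪ Y)).Connected := by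
  have h1 : (G.induce ({a, b} : Set V)).Connected := induce_pair_connected_of_adj hab
  have h2 := induce_union_connected hX.preconnected h1.preconnected ⟨a, ha, by simp⟩
  have h3 := induce_union_connected h2.preconnected hY.preconnected ⟨b, by simp, hb⟩
  have : X ∪ {a, b} ∪ Y = X ∪ Y := by
    ext z; simp only [Set.mem_union, Set.mem_insert_iff, Set.mem_singleton_iff]
    constructor
    · rintro ((h | rfl | rfl) | h) <;> simp [*]
    · rintro (h | h) <;> simp [*]
  rw [this] at h3
  exact h3

lemma conn_single (x : V) : (G.induce ({x} : Set V)).Connected := by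
  have : Nonempty ↥({x} : Set V) := ⟨⟨x, rfl⟩⟩
  have : Subsingleton ↥({x} : Set V) := by infer_instance
  exact ⟨.of_subsingleton⟩

lemma NC.nocross {p : V → ℕ} (hp : NC G p) {X Y : Set V}
    (hX : (G.induce X).Connected) (hY : (G.induce Y).Connected) (hd : Disjoint X Y)
    {a b c d : V} (ha : a ∈ X) (hc : c ∈ X) (hb : b ∈ Y) (hdY : d ∈ Y) :
    ¬ (p a < p b ∧ p b < p c ∧ p c < p d) := by
  rintro ⟨h1, h2, h3⟩
  have ne : ∀ x ∈ X, ∀ y ∈ Y, p x ≠ p y := fun x hx y hy h =>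
    Set.disjoint_left.1 hd hx (hp.1 h ▸ hy)
  obtain ⟨x, hx, x', hx', hxx, ⟨hP1, hP2⟩, hP3⟩ :=
    conn_boundary hX (fun x => p b < p x ∧ p x < p d) hc ha ⟨h2, h3⟩ (by omega)
  have n1 := ne x' hx' b hb
  have n2 := ne x' hx' d hdY
  rcases lt_or_ge (p x') (p b) with h | h
  · obtain ⟨y, hy, y', hy', hyy, ⟨hQ1, hQ2⟩, hQ3⟩ :=
      conn_boundary hY (fun y => p x' < p y ∧ p y < p x) hb hdY ⟨h, hP1⟩ (by omega)
    have n3 := ne x hx y' hy'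
    have n4 := ne x' hx' y' hy'
    rcases lt_or_ge (p y') (p x') with h' | h'
    · exact hp.2 y' x' y x hyy.symm hxx.symm h' hQ1 hQ2
    · exact hp.2 x' y x y' hxx.symm hyy hQ1 hQ2 (by omega)
  · obtain ⟨y, hy, y', hy', hyy, ⟨hQ1, hQ2⟩, hQ3⟩ :=
      conn_boundary hY (fun y => p x < p y ∧ p y < p x') hdY hb ⟨hP2, by omega⟩ (by omega)
    have n3 := ne x hx y' hy'
    have n4 := ne x' hx' y' hy'
    rcases lt_or_ge (p y') (p x) with h' | h'
    · exact hp.2 y' x y x' hyy.symm hxx h' hQ1 hQ2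
    · exact hp.2 x y x' y' hxx hyy hQ1 hQ2 (by omega)

lemma NC.outerplanar {p : V → ℕ} (hp : NC G p) : Outerplanar G := by
  constructor
  · rintro ⟨μ, hc, hd, ha⟩
    have hne : ∀ i, ∃ x, x ∈ μ i := fun i => by
      obtain ⟨x⟩ := (hc i).nonempty; exact ⟨x, x.2⟩
    choose x hx using hne
    have hinj : Function.Injective (p ∘ x) := by
      intro i j h
      by_contra hij
      have := hp.1 h
      exact Set.disjoint_left.1 (hd hij) (hx i) (this ▸ hx j)
    set σ := Tuple.sort (p ∘ x)
    have hm : StrictMono ((p ∘ x) ∘ σ) :=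
      (Tuple.monotone_sort (p ∘ x)).strictMono_of_injective (hinj.comp σ.injective)
    have un : ∀ i j : Fin 4, i ≠ j → (G.induce (μ (σ i) ∪ μ (σ j))).Connected := by
      intro i j hij
      obtain ⟨a, ha, b, hb, hab⟩ := ha (show (completeGraph (Fin 4)).Adj (σ i) (σ j) from
        fun h => hij (σ.injective h))
      exact conn_union (hc _) (hc _) ha hb hab
    have dj : ∀ i j : Fin 4, i ≠ j → Disjoint (μ (σ i)) (μ (σ j)) := fun i j hij =>
      hd (fun h => hij (σ.injective h))
    refine hp.nocross (un 0 2 (by decide)) (un 1 3 (by decide)) ?_ (Or.inl (hx _))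
      (Or.inr (hx _)) (Or.inl (hx _)) (Or.inr (hx _)) ⟨hm (by decide : (0 : Fin 4) < 1),
        hm (by decide : (1 : Fin 4) < 2), hm (by decide : (2 : Fin 4) < 3)⟩
    simp only [Set.disjoint_union_left, Set.disjoint_union_right]
    exact ⟨⟨dj _ _ (by decide), dj _ _ (by decide)⟩, dj _ _ (by decide), dj _ _ (by decide)⟩
  · rintro ⟨μ, hc, hd, hadj⟩
    have hne : ∀ i, ∃ x, x ∈ μ i := fun i => by
      obtain ⟨x⟩ := (hc i).nonempty; exact ⟨x, x.2⟩
    choose x hx using hne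
    have hinj : ∀ i j, i ≠ j → p (x i) ≠ p (x j) := by
      intro i j hij h
      have := hp.1 h
      exact Set.disjoint_left.1 (hd hij) (hx i) (this ▸ hx j)
    have un : ∀ (i : Fin 2) (j : Fin 3), (G.induce (μ (.inl i) ∪ μ (.inr j))).Connected := by
      intro i j
      obtain ⟨a, ha, b, hb, hab⟩ := hadj (show (completeBipartiteGraph (Fin 2) (Fin 3)).Adj
        (.inl i) (.inr j) by simp)
      exact conn_union (hc _) (hc _) ha hb hab
    set a := x (.inl 0) with ha
    set b := x (.inl 1) with hb
    have key : ∀ i j : Fin 3, i ≠ j →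
        ¬ (((p a < p (x (.inr i)) ↔ p (x (.inr i)) < p b)) ↔
          ((p a < p (x (.inr j)) ↔ p (x (.inr j)) < p b))) := by
      intro i j hij
      have hdj : Disjoint (μ (.inl 0) ∪ μ (.inr i)) (μ (.inl 1) ∪ μ (.inr j)) := by
        simp only [Set.disjoint_union_left, Set.disjoint_union_right]
        exact ⟨⟨hd (by simp), hd (by simp)⟩, hd (by simp), hd (by simpa using hij)⟩
      have hdj' : Disjoint (μ (.inl 0) ∪ μ (.inr j)) (μ (.inl 1) ∪ μ (.inr i)) := by
        simp only [Set.disjoint_union_left, Set.disjoint_union_right]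
        exact ⟨⟨hd (by simp), hd (by simp)⟩, hd (by simp), hd (by simpa using hij.symm)⟩
      have A : ∀ k, a ∈ μ (.inl 0) ∪ μ (.inr k) := fun k => Or.inl (hx _)
      have B : ∀ k, b ∈ μ (.inl 1) ∪ μ (.inr k) := fun k => Or.inl (hx _)
      have A' : ∀ k, x (.inr k) ∈ μ (.inl 0) ∪ μ (.inr k) := fun k => Or.inr (hx _)
      have B' : ∀ k, x (.inr k) ∈ μ (.inl 1) ∪ μ (.inr k) := fun k => Or.inr (hx _)
      have c1 := hp.nocross (un 0 i) (un 1 j) hdj (A i) (A' i) (B j) (B' j)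
      have c2 := hp.nocross (un 0 i) (un 1 j) hdj (A i) (A' i) (B' j) (B j)
      have c3 := hp.nocross (un 0 i) (un 1 j) hdj (A' i) (A i) (B j) (B' j)
      have c4 := hp.nocross (un 0 i) (un 1 j) hdj (A' i) (A i) (B' j) (B j)
      have c5 := hp.nocross (un 1 j) (un 0 i) hdj.symm (B j) (B' j) (A i) (A' i)
      have c6 := hp.nocross (un 1 j) (un 0 i) hdj.symm (B j) (B' j) (A' i) (A i)
      have c7 := hp.nocross (un 1 j) (un 0 i) hdj.symm (B' j) (B j) (A i) (A' i)
      have c8 := hp.nocross (un 1 j) (un 0 i) hdj.symm (B' j) (B j) (A' i) (A i)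
      have e1 := hp.nocross (un 0 j) (un 1 i) hdj' (A j) (A' j) (B i) (B' i)
      have e2 := hp.nocross (un 0 j) (un 1 i) hdj' (A j) (A' j) (B' i) (B i)
      have e3 := hp.nocross (un 0 j) (un 1 i) hdj' (A' j) (A j) (B i) (B' i)
      have e4 := hp.nocross (un 0 j) (un 1 i) hdj' (A' j) (A j) (B' i) (B i)
      have e5 := hp.nocross (un 1 i) (un 0 j) hdj'.symm (B i) (B' i) (A j) (A' j)
      have e6 := hp.nocross (un 1 i) (un 0 j) hdj'.symm (B i) (B' i) (A' j) (A j)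
      have e7 := hp.nocross (un 1 i) (un 0 j) hdj'.symm (B' i) (B i) (A j) (A' j)
      have e8 := hp.nocross (un 1 i) (un 0 j) hdj'.symm (B' i) (B i) (A' j) (A j)
      have n1 : p a ≠ p b := hinj _ _ (by simp)
      have n2 : p a ≠ p (x (.inr i)) := hinj _ _ (by simp)
      have n3 : p a ≠ p (x (.inr j)) := hinj _ _ (by simp)
      have n4 : p b ≠ p (x (.inr i)) := hinj _ _ (by simp)
      have n5 : p b ≠ p (x (.inr j)) := hinj _ _ (by simp)
      have n6 : p (x (.inr i)) ≠ p (x (.inr j)) := hinj _ _ (by simpa using hij)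
      clear_value a b
      generalize p a = a at *
      generalize p b = b at *
      generalize p (x (.inr i)) = s at *
      generalize p (x (.inr j)) = t at *
      clear un hadj hinj hx hc hd A B A' B'
      rcases lt_or_gt_of_ne n1 with m1 | m1 <;> rcases lt_or_gt_of_ne n2 with m2 | m2 <;>
      rcases lt_or_gt_of_ne n3 with m3 | m3 <;> rcases lt_or_gt_of_ne n4 with m4 | m4 <;>
      rcases lt_or_gt_of_ne n5 with m5 | m5 <;> rcases lt_or_gt_of_ne n6 with m6 | m6 <;>
      simp only [m1, m2, m3, m4, m5, m6, m1.not_gt, m2.not_gt, m3.not_gt, m4.not_gt, m5.not_gt,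
        m6.not_gt] at * <;> first | omega | simp_all
    have k1 := key 0 1 (by decide)
    have k2 := key 0 2 (by decide)
    have k3 := key 1 2 (by decide)
    tauto

end Part1


section Part2
variable {V : Type*} {G : SimpleGraph V}

/-- Non-crossing placement of a vertex subset. -/
def NCOn (G : SimpleGraph V) (S : Set V) (p : V → ℕ) : Prop :=
  Set.InjOn p S ∧ ∀ a ∈ S, ∀ b ∈ S, ∀ c ∈ S, ∀ d ∈ S, G.Adj a c → G.Adj b d →
    p a < p b → p b < p c → p c < p d → False

lemma nc_iff {p : V → ℕ} : NC G p ↔ NCOn G Set.univ p := by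
  simp [NC, NCOn, Set.injOn_univ]

/-- Rotation of a placement. -/
def rot (p : V → ℕ) (N m : ℕ) (x : V) : ℕ := if p x < m then p x + N else p x

lemma NCOn.rot {S : Set V} {p : V → ℕ} (hp : NCOn G S p) {N : ℕ} (hN : ∀ x ∈ S, p x < N)
    (m : ℕ) : NCOn G S (rot p N m) := by
  constructor
  · intro x hx y hy h
    have := hN x hx
    have := hN y hy
    apply hp.1 hx hy
    simp only [_root_.rot] at h
    split_ifs at h <;> omega
  · intro a ha b hb c hc d hd hac hbd h1 h2 h3
    have A := hN a ha
    have B := hN b hb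
    have C := hN c hc
    have D := hN d hd
    have n1 := hp.2 a ha b hb c hc d hd hac hbd
    have n2 := hp.2 b hb c hc d hd a ha hbd hac.symm
    have n3 := hp.2 c hc d hd a ha b hb hac.symm hbd.symm
    have n4 := hp.2 d hd a ha b hb c hc hbd.symm hac
    simp only [_root_.rot] at h1 h2 h3
    split_ifs at h1 h2 h3 <;> first
      | omega
      | exact n1 (by omega) (by omega) (by omega)
      | exact n2 (by omega) (by omega) (by omega)
      | exact n3 (by omega) (by omega) (by omega)
      | exact n4 (by omega) (by omega) (by omega)

lemma NCOn.rot_min {S : Set V} (hS : S.Finite) {p : V → ℕ} (hp : NCOn G S p) {v : V}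
    (hv : v ∈ S) : ∃ q, NCOn G S q ∧ ∀ x ∈ S, x ≠ v → q v < q x := by
  obtain ⟨N, hN⟩ := (hS.image p).bddAbove
  have hN' : ∀ x ∈ S, p x < N + 1 := fun x hx => Nat.lt_succ_of_le (hN ⟨x, hx, rfl⟩)
  refine ⟨_, hp.rot hN' (p v), ?_⟩
  intro x hx hxv
  have h1 := hN' v hv
  have : p x ≠ p v := fun h => hxv (hp.1 hx hv h)
  simp only [_root_.rot]
  split_ifs <;> omega

lemma NCOn.glue {A B : Set V} (hAf : A.Finite) (hBf : B.Finite) {p q : V → ℕ}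
    (hp : NCOn G A p) (hq : NCOn G B q) {v : V}
    (hvA : v ∈ A) (hvB : v ∈ B) (hAB : ∀ x ∈ A, x ∈ B → x = v)
    (hE : ∀ x ∈ A, ∀ y ∈ B, G.Adj x y → x ∈ B ∨ y ∈ A) :
    ∃ r, NCOn G (A ∪ B) r := by
  obtain ⟨p, hp, hpm⟩ := hp.rot_min hAf hvA
  obtain ⟨q, hq, hqm⟩ := hq.rot_min hBf hvB
  obtain ⟨N, hN⟩ := (hAf.image p).bddAbove
  have hN : ∀ x ∈ A, p x ≤ N := fun x hx => (hN ⟨x, hx, rfl⟩)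
  set r : V → ℕ := fun x => if x ∈ A then p x else N + 1 + q x with hr
  have rA : ∀ x ∈ A, r x = p x := fun x hx => by simp [hr, hx]
  have rB : ∀ x ∉ A, r x = N + 1 + q x := fun x hx => by simp [hr, hx]
  have ord : ∀ x ∈ B, ∀ y ∈ B, r x < r y → q x < q y := by
    intro x hx y hy h
    by_cases hxA : x ∈ A
    · have := hAB x hxA hx
      subst this
      by_cases hyA : y ∈ A
      · have := hAB y hyA hy
        subst this; omega
      · exact hqm y hy (fun h => hyA (h ▸ hxA))
    · rw [rB x hxA] at h
      by_cases hyA : y ∈ A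
      · rw [rA y hyA] at h
        have := hN y hyA
        omega
      · rw [rB y hyA] at h; omega
  have vmin : ∀ x ∈ A, ¬ p x < p v := by
    intro x hx h
    by_cases e : x = v
    · subst e; omega
    · have := hpm x hx e; omega
  have edge : ∀ x ∈ A ∪ B, ∀ y ∈ A ∪ B, G.Adj x y → (x ∈ A ∧ y ∈ A) ∨ (x ∈ B ∧ y ∈ B) := by
    rintro x (hx | hx) y (hy | hy) h
    · exact Or.inl ⟨hx, hy⟩
    · rcases hE x hx y hy h with h | h
      · exact Or.inr ⟨h, hy⟩
      · exact Or.inl ⟨hx, h⟩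
    · rcases hE y hy x hx h.symm with h | h
      · exact Or.inr ⟨hx, h⟩
      · exact Or.inl ⟨h, hy⟩
    · exact Or.inr ⟨hx, hy⟩
  refine ⟨r, ?_, ?_⟩
  · intro x hx y hy h
    by_cases hxA : x ∈ A <;> by_cases hyA : y ∈ A
    · rw [rA x hxA, rA y hyA] at h; exact hp.1 hxA hyA h
    · rw [rA x hxA, rB y hyA] at h; have := hN x hxA; omega
    · rw [rB x hxA, rA y hyA] at h; have := hN y hyA; omega
    · rw [rB x hxA, rB y hyA] at h
      exact hq.1 (hx.resolve_left hxA) (hy.resolve_left hyA) (by omega)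
  · intro a ha b hb c hc d hd hac hbd h1 h2 h3
    rcases edge a ha c hc hac with ⟨ha', hc'⟩ | ⟨ha', hc'⟩ <;>
      rcases edge b hb d hd hbd with ⟨hb', hd'⟩ | ⟨hb', hd'⟩
    · rw [rA _ ha', rA _ hb'] at h1
      rw [rA _ hb', rA _ hc'] at h2
      rw [rA _ hc', rA _ hd'] at h3
      exact hp.2 a ha' b hb' c hc' d hd' hac hbd h1 h2 h3
    · by_cases hbA : b ∈ A
      · have := hAB b hbA hb'
        subst this
        rw [rA _ ha', rA _ hbA] at h1
        exact vmin a ha' h1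
      · rw [rB _ hbA, rA _ hc'] at h2
        have := hN c hc'; omega
    · by_cases hcA : c ∈ A
      · have := hAB c hcA hc'
        subst this
        rw [rA _ hb', rA _ hcA] at h2
        exact vmin b hb' h2
      · rw [rB _ hcA, rA _ hd'] at h3
        have := hN d hd'; omega
    · exact hq.2 a ha' b hb' c hc' d hd' hac hbd (ord _ ha' _ hb' h1) (ord _ hb' _ hc' h2)
        (ord _ hc' _ hd' h3)

lemma chain_conn : ∀ (l : List V), l ≠ [] → l.IsChain G.Adj →
    (G.induce {x | x ∈ l}).Connected
  | [], h, _ => absurd rfl h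
  | [a], _, _ => by
    have : {x | x ∈ [a]} = ({a} : Set V) := by ext; simp
    rw [this]; exact conn_single a
  | a :: b :: l, _, h => by
    rw [List.isChain_cons_cons] at h
    have ih := chain_conn (b :: l) (by simp) h.2
    have := conn_union (conn_single a) ih (a := a) (b := b) rfl (by simp) h.1
    have e : {x | x ∈ a :: b :: l} = ({a} : Set V) ∪ {x | x ∈ b :: l} := by ext; simp
    rw [e]; exact this

lemma k4_helper (h : Outerplanar G) {A B C D : Set V}
    (hA : (G.induce A).Connected) (hB : (G.induce B).Connected)
    (hC : (G.induce C).Connected) (hD : (G.induce D).Connected)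
    (dAB : Disjoint A B) (dAC : Disjoint A C) (dAD : Disjoint A D)
    (dBC : Disjoint B C) (dBD : Disjoint B D) (dCD : Disjoint C D)
    (eAB : ∃ a ∈ A, ∃ b ∈ B, G.Adj a b) (eAC : ∃ a ∈ A, ∃ b ∈ C, G.Adj a b)
    (eAD : ∃ a ∈ A, ∃ b ∈ D, G.Adj a b) (eBC : ∃ a ∈ B, ∃ b ∈ C, G.Adj a b)
    (eBD : ∃ a ∈ B, ∃ b ∈ D, G.Adj a b) (eCD : ∃ a ∈ C, ∃ b ∈ D, G.Adj a b) : False := by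
  have sw : ∀ {X Y : Set V}, (∃ a ∈ X, ∃ b ∈ Y, G.Adj a b) → ∃ a ∈ Y, ∃ b ∈ X, G.Adj a b := by
    rintro X Y ⟨a, ha, b, hb, h⟩; exact ⟨b, hb, a, ha, h.symm⟩
  refine h.1 ⟨![A, B, C, D], ?_, ?_, ?_⟩
  · intro w; fin_cases w <;> assumption
  · intro i j hij
    fin_cases i <;> fin_cases j <;> first | exact absurd rfl hij | assumption | (apply Disjoint.symm; assumption)
  · intro i j hij
    fin_cases i <;> fin_cases j <;> first | exact absurd rfl hij.ne | assumption | (apply sw; assumption)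

lemma k23_helper (h : Outerplanar G) {A B X Y Z : Set V}
    (hA : (G.induce A).Connected) (hB : (G.induce B).Connected)
    (hX : (G.induce X).Connected) (hY : (G.induce Y).Connected) (hZ : (G.induce Z).Connected)
    (dAB : Disjoint A B) (dAX : Disjoint A X) (dAY : Disjoint A Y) (dAZ : Disjoint A Z)
    (dBX : Disjoint B X) (dBY : Disjoint B Y) (dBZ : Disjoint B Z)
    (dXY : Disjoint X Y) (dXZ : Disjoint X Z) (dYZ : Disjoint Y Z)
    (eAX : ∃ a ∈ A, ∃ b ∈ X, G.Adj a b) (eAY : ∃ a ∈ A, ∃ b ∈ Y, G.Adj a b)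
    (eAZ : ∃ a ∈ A, ∃ b ∈ Z, G.Adj a b) (eBX : ∃ a ∈ B, ∃ b ∈ X, G.Adj a b)
    (eBY : ∃ a ∈ B, ∃ b ∈ Y, G.Adj a b) (eBZ : ∃ a ∈ B, ∃ b ∈ Z, G.Adj a b) : False := by
  have sw : ∀ {X Y : Set V}, (∃ a ∈ X, ∃ b ∈ Y, G.Adj a b) → ∃ a ∈ Y, ∃ b ∈ X, G.Adj a b := by
    rintro X Y ⟨a, ha, b, hb, h⟩; exact ⟨b, hb, a, ha, h.symm⟩
  refine h.2 ⟨Sum.elim ![A, B] ![X, Y, Z], ?_, ?_, ?_⟩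
  · rintro (w | w) <;> fin_cases w <;> assumption
  · rintro (i | i) (j | j) hij <;>
    fin_cases i <;> fin_cases j <;> first | exact absurd rfl hij | assumption | (apply Disjoint.symm; assumption)
  · rintro (i | i) (j | j) hij <;> first | (simp at hij; done) | skip
    all_goals fin_cases i <;> fin_cases j <;> first | assumption | (apply sw; assumption)

end Part2


section Part3
variable {V : Type*} {G : SimpleGraph V}

/-- A cyclic list of vertices. -/
def Cyc (G : SimpleGraph V) (l : List V) : Prop :=
  l.Nodup ∧ l.IsChain G.Adj ∧ ∀ x ∈ l.getLast?, ∀ y ∈ l.head?, G.Adj x y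

lemma Cyc.rotate {l₁ l₂ : List V} (h : Cyc G (l₁ ++ l₂)) : Cyc G (l₂ ++ l₁) := by
  rcases l₁.eq_nil_or_concat with rfl | ⟨l, z, rfl⟩
  · simpa using h
  rcases l₂ with _ | ⟨y, l₂⟩
  · simpa using h
  obtain ⟨h1, h2, h3⟩ := h
  refine ⟨List.nodup_append_comm.1 h1, ?_, ?_⟩
  · rw [List.isChain_append] at h2 ⊢
    refine ⟨h2.2.1, h2.1, ?_⟩
    intro a ha b hb
    apply h3
    · simpa [List.getLast?_append] using ha
    · rw [List.head?_append_of_ne_nil _ (by simp)]; exact hb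
  · rw [List.isChain_append] at h2
    intro a ha b hb
    apply h2.2.2
    · rw [List.getLast?_append] at ha; simpa using ha
    · simpa using hb

lemma path_list {D : Set V} (hD : (G.induce D).Connected) {a b : V} (ha : a ∈ D) (hb : b ∈ D) :
    ∃ P : List V, P ≠ [] ∧ P.Nodup ∧ P.IsChain G.Adj ∧ (∀ x ∈ P, x ∈ D) ∧
      P.head? = some a ∧ P.getLast? = some b := by
  obtain ⟨w, hw⟩ := (hD.preconnected ⟨a, ha⟩ ⟨b, hb⟩).exists_isPath
  refine ⟨w.support.map Subtype.val, by rw [Ne, List.map_eq_nil_iff]; exact w.support_ne_nil, ?_, ?_, ?_, ?_, ?_⟩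
  · exact hw.support_nodup.map Subtype.val_injective
  · rw [List.isChain_map]
    exact w.isChain_adj_support
  · intro x hx
    obtain ⟨y, -, rfl⟩ := List.mem_map.1 hx
    exact y.2
  · rw [List.head?_map, List.head?_eq_some_head w.support_ne_nil, w.head_support]; rfl
  · rw [List.getLast?_map, List.getLast?_eq_some_getLast w.support_ne_nil, w.getLast_support]; rfl

lemma Cyc.extend (hG : Outerplanar G) {S : Finset V}
    (H2 : ∀ v ∈ S, ∀ D ⊆ S, v ∉ D → D.Nonempty → (∃ y ∈ S, y ∉ D ∧ y ≠ v) →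
      ∃ x ∈ D, ∃ y ∈ S, y ∉ D ∧ y ≠ v ∧ G.Adj x y)
    {l : List V} (hl : Cyc G l) (hlen : 2 ≤ l.length) (hlS : ∀ x ∈ l, x ∈ S)
    {x : V} (hx : x ∈ S) (hxl : x ∉ l) :
    ∃ l', Cyc G l' ∧ (∀ x ∈ l', x ∈ S) ∧ l.length < l'.length := by
  have hne : (S.powerset.filter (fun D : Finset V => x ∈ D ∧ (∀ y ∈ D, y ∉ l) ∧
      (G.induce (D : Set V)).Connected)).Nonempty := by
    refine ⟨{x}, ?_⟩
    simp only [Finset.mem_filter, Finset.mem_powerset, Finset.singleton_subset_iff]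
    refine ⟨hx, by simp, by simpa using hxl, ?_⟩
    rw [Finset.coe_singleton]; exact conn_single x
  obtain ⟨D, hD, hmax⟩ := Finset.exists_max_image _ Finset.card hne
  simp only [Finset.mem_filter, Finset.mem_powerset] at hD hmax
  obtain ⟨hDS, hxD, hDl, hDc⟩ := hD
  have hcl : ∀ d ∈ D, ∀ y ∈ S, y ∉ D → G.Adj d y → y ∈ l := by
    intro d hd y hy hyD hdy
    by_contra hyl
    have := hmax (insert y D) ⟨Finset.insert_subset hy hDS, by simp [hxD], ?_, ?_⟩
    · rw [Finset.card_insert_of_notMem hyD] at this; omega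
    · simp only [Finset.mem_insert, forall_eq_or_imp]; exact ⟨hyl, hDl⟩
    · have := conn_union (conn_single y) hDc (a := y) (b := d) rfl hd hdy.symm
      rw [Finset.coe_insert, Set.insert_eq]; exact this
  obtain ⟨u, u', l0, rfl⟩ : ∃ u u' l0, l = u :: u' :: l0 := by
    rcases l with _ | ⟨u, _ | ⟨u', l0⟩⟩
    · simp at hlen
    · simp at hlen
    · exact ⟨_, _, _, rfl⟩
  have huu : u ≠ u' := by
    have := hl.1; simp at this; tauto
  -- two attachments
  obtain ⟨dp, hdp, p, hpS, hpD, hpu, hadp⟩ := H2 u (hlS u (by simp)) D hDS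
    (fun h => hDl u h (by simp)) ⟨x, hxD⟩
    ⟨u', hlS u' (by simp), fun h => hDl u' h (by simp), huu.symm⟩
  have hpl := hcl dp hdp p hpS hpD hadp
  obtain ⟨dq, hdq, q, hqS, hqD, hqp, hadq⟩ := H2 p hpS D hDS hpD ⟨x, hxD⟩
    ⟨u, hlS u (by simp), fun h => hDl u h (by simp), hpu.symm⟩
  have hql := hcl dq hdq q hqS hqD hadq
  generalize hL : u :: u' :: l0 = l at *
  -- rotate
  obtain ⟨s, t, hst⟩ := List.append_of_mem hpl
  have hl' : Cyc G (p :: (t ++ s)) := by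
    have : Cyc G (s ++ (p :: t)) := hst ▸ hl
    simpa using this.rotate
  have hmem : ∀ z, z ∈ l ↔ z ∈ p :: (t ++ s) := by
    intro z; rw [hst]; simp; tauto
  have hlen' : l.length = (p :: (t ++ s)).length := by rw [hst]; simp; omega
  generalize t ++ s = m at *
  have hqm : q ∈ m := by
    have := (hmem q).1 hql
    simpa [hqp] using this
  obtain ⟨m1, m2, rfl⟩ := List.append_of_mem hqm
  rw [hlen']
  have hDl' : ∀ y ∈ D, y ∉ p :: (m1 ++ q :: m2) := fun y hy h => hDl y hy ((hmem y).2 h)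
  have hlS' : ∀ y ∈ p :: (m1 ++ q :: m2), y ∈ S := fun y h => hlS y ((hmem y).2 h)
  clear hlen' hmem hst hL hpl hql hqm hlen hDl hlS hcl hmax hne hl
  obtain ⟨hnd, hch, hcy⟩ := hl'
  rcases m1 with _ | ⟨c1, m1⟩
  · obtain ⟨P, hP0, hPn, hPc, hPD, hPh, hPl⟩ := path_list hDc hdp hdq
    refine ⟨p :: (P ++ q :: m2), ⟨?_, ?_, ?_⟩, ?_, ?_⟩
    · simp only [List.nil_append, List.nodup_cons, List.mem_cons, List.mem_append, not_or,
        List.nodup_append] at hnd hDl' ⊢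
      refine ⟨⟨fun h => hpD (hPD _ h), hnd.1⟩, hPn, hnd.2, ?_⟩
      rintro a ha b (rfl | hb) rfl
      · exact hqD (hPD _ ha)
      · exact (hDl' _ (hPD _ ha)).2.2 hb
    · rw [List.isChain_cons, List.isChain_append]
      simp only [List.nil_append, List.isChain_cons] at hch ⊢
      refine ⟨?_, hPc, hch.2, ?_⟩
      · intro y hy
        rw [List.head?_append_of_ne_nil _ hP0, hPh] at hy
        obtain rfl : dp = y := by simpa using hy
        exact hadp.symm
      · intro a ha b hb
        rw [hPl] at ha
        obtain rfl : dq = a := by simpa using ha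
        obtain rfl : q = b := by simpa using hb
        exact hadq
    · intro a ha b hb
      apply hcy a _ b (by simpa using hb)
      simpa [List.getLast?_cons, List.getLast?_append] using ha
    · intro a ha
      simp only [List.mem_cons, List.mem_append] at ha
      rcases ha with rfl | ha | ha
      · exact hpS
      · exact hDS (hPD _ ha)
      · exact hlS' a (by simp; tauto)
    · have := List.length_pos_iff.2 hP0
      simp; omega
  rcases m2 with _ | ⟨c2, m2⟩
  · obtain ⟨P, hP0, hPn, hPc, hPD, hPh, hPl⟩ := path_list hDc hdq hdp
    refine ⟨(p :: (c1 :: m1 ++ [q])) ++ P, ⟨?_, ?_, ?_⟩, ?_, ?_⟩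
    · rw [List.nodup_append]
      refine ⟨hnd, hPn, ?_⟩
      rintro a ha b hb rfl
      exact hDl' _ (hPD _ hb) ha
    · rw [List.isChain_append]
      refine ⟨hch, hPc, ?_⟩
      intro a ha b hb
      rw [hPh] at hb
      obtain rfl : dq = b := by simpa using hb
      obtain rfl : q = a := by
        rw [← List.cons_append, List.getLast?_append] at ha; simpa using ha
      exact hadq.symm
    · intro a ha b hb
      rw [List.getLast?_append, hPl] at ha
      obtain rfl : dp = a := by simpa using ha
      obtain rfl : p = b := by simpa using hb
      exact hadp
    · intro a ha
      rcases List.mem_append.1 ha with ha | ha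
      · exact hlS' a ha
      · exact hDS (hPD _ ha)
    · have := List.length_pos_iff.2 hP0
      simp; omega
  · exfalso
    have hch' := hch
    rw [List.isChain_cons, List.isChain_append] at hch'
    obtain ⟨e1, hc1, hc2', e3⟩ := hch'
    obtain ⟨e2, hc2⟩ := List.isChain_cons.1 hc2'
    simp only [List.nodup_cons, List.nodup_append] at hnd
    obtain ⟨n1, n2, n3, n4⟩ := hnd
    obtain ⟨z1, hz1⟩ : ∃ z, (c1 :: m1).getLast? = some z :=
      ⟨_, List.getLast?_eq_some_getLast (by simp)⟩
    obtain ⟨z2, hz2⟩ : ∃ z, (c2 :: m2).getLast? = some z :=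
      ⟨_, List.getLast?_eq_some_getLast (by simp)⟩
    refine k23_helper hG (conn_single p) (conn_single q) hDc
      (chain_conn (c1 :: m1) (by simp) hc1) (chain_conn (c2 :: m2) (by simp) hc2)
      ?_ ?_ ?_ ?_ ?_ ?_ ?_ ?_ ?_ ?_ ?_ ?_ ?_ ?_ ?_ ?_
    · simpa using Ne.symm hqp
    · simpa using hpD
    · rw [Set.disjoint_singleton_left]; intro h; exact n1 (List.mem_append_left _ h)
    · rw [Set.disjoint_singleton_left]; intro h
      exact n1 (List.mem_append_right _ (List.mem_cons_of_mem _ h))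
    · simpa using hqD
    · rw [Set.disjoint_singleton_left]; intro h
      exact n4 q h q (by simp) rfl
    · rw [Set.disjoint_singleton_left]; intro h
      exact n3.1 h
    · rw [Set.disjoint_left]; intro a ha h
      exact hDl' a ha (List.mem_cons_of_mem _ (List.mem_append_left _ h))
    · rw [Set.disjoint_left]; intro a ha h
      exact hDl' a ha (List.mem_cons_of_mem _ (List.mem_append_right _ (List.mem_cons_of_mem _ h)))
    · rw [Set.disjoint_left]; intro a ha h
      exact n4 a ha a (List.mem_cons_of_mem _ h) rfl
    · exact ⟨p, rfl, dp, hdp, hadp.symm⟩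
    · exact ⟨p, rfl, c1, by simp, e1 c1 (by simp)⟩
    · refine ⟨p, rfl, z2, List.mem_of_getLast? hz2, (hcy z2 ?_ p (by simp)).symm⟩
      rw [← List.cons_append, List.getLast?_append, List.getLast?_cons_cons, hz2]; simp
    · exact ⟨q, rfl, dq, hdq, hadq.symm⟩
    · exact ⟨q, rfl, z1, List.mem_of_getLast? hz1, (e3 z1 hz1 q (by simp)).symm⟩
    · exact ⟨q, rfl, c2, by simp, e2 c2 (by simp)⟩

lemma exists_ham (hG : Outerplanar G) {S : Finset V}
    (H2 : ∀ v ∈ S, ∀ D ⊆ S, v ∉ D → D.Nonempty → (∃ y ∈ S, y ∉ D ∧ y ≠ v) →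
      ∃ x ∈ D, ∃ y ∈ S, y ∉ D ∧ y ≠ v ∧ G.Adj x y) :
    ∀ (k : ℕ) (l : List V), Cyc G l → 2 ≤ l.length → (∀ x ∈ l, x ∈ S) →
      S.card - l.length ≤ k → ∃ l, Cyc G l ∧ ∀ x, x ∈ l ↔ x ∈ S := by
  intro k
  induction k with
  | zero =>
    intro l hl hlen hlS hk
    refine ⟨l, hl, ?_⟩
    have h1 : l.toFinset ⊆ S := fun x hx => hlS x (by simpa using hx)
    have h2 := List.toFinset_card_of_nodup hl.1
    have h3 := Finset.eq_of_subset_of_card_le h1 (by omega)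
    intro x; rw [← h3]; simp
  | succ k ih =>
    intro l hl hlen hlS hk
    by_cases h : ∃ x ∈ S, x ∉ l
    · obtain ⟨x, hx, hxl⟩ := h
      obtain ⟨l', hl', hS', hlt⟩ := hl.extend hG H2 hlen hlS hx hxl
      exact ih l' hl' (by omega) hS' (by omega)
    · push Not at h
      exact ⟨l, hl, fun x => ⟨hlS x, h x⟩⟩

lemma list_split {l : List V} (hl : l.Nodup) {a : V} (ha : a ∈ l) :
    ∃ s t, l = s ++ a :: t ∧
      ∀ x ∈ l, l.idxOf a < l.idxOf x → x ∈ t ∧ l.idxOf x = s.length + 1 + t.idxOf x := by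
  obtain ⟨s, t, rfl⟩ := List.append_of_mem ha
  refine ⟨s, t, rfl, ?_⟩
  intro x hx hlt
  rw [List.nodup_append] at hl
  have has : a ∉ s := fun h => hl.2.2 a h a (by simp) rfl
  rw [List.idxOf_append_of_notMem has, List.idxOf_cons_self] at hlt
  have hxs : x ∉ s := by
    intro h
    rw [List.idxOf_append_of_mem h] at hlt
    have := List.idxOf_lt_length_of_mem h
    omega
  rw [List.idxOf_append_of_notMem hxs] at hlt ⊢
  have hxa : a ≠ x := by
    rintro rfl
    rw [List.idxOf_cons_self] at hlt
    omega
  rw [List.idxOf_cons_ne _ hxa]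
  simp [hxs, Ne.symm hxa] at hx
  exact ⟨hx, by omega⟩

lemma Cyc.nc (hG : Outerplanar G) {l : List V} (hl : Cyc G l) :
    NCOn G {x | x ∈ l} (fun x => l.idxOf x) := by
  constructor
  · intro x hx y hy h
    exact (List.idxOf_inj hx).1 h
  · intro a ha b hb c hc d hd hac hbd h1 h2 h3
    change a ∈ l at ha
    change b ∈ l at hb
    change c ∈ l at hc
    change d ∈ l at hd
    beta_reduce at h1 h2 h3
    obtain ⟨l0, t, e, ht⟩ := list_split hl.1 ha
    have hb1 := ht b hb h1
    have hc1 := ht c hc (h1.trans h2)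
    have hd1 := ht d hd (h1.trans (h2.trans h3))
    have hnd : t.Nodup := by
      have := hl.1; rw [e, List.nodup_append] at this; exact (List.nodup_cons.1 this.2.1).2
    obtain ⟨l1, t', e', ht'⟩ := list_split hnd hb1.1
    have hc2 := ht' c hc1.1 (by omega)
    have hd2 := ht' d hd1.1 (by omega)
    have hnd' : t'.Nodup := by
      rw [e', List.nodup_append] at hnd; exact (List.nodup_cons.1 hnd.2.1).2
    obtain ⟨l2, t'', e'', ht''⟩ := list_split hnd' hc2.1
    have hd3 := ht'' d hd2.1 (by omega)
    obtain ⟨l3, l4, e3⟩ := List.append_of_mem hd3.1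
    have hl' : Cyc G (a :: l1 ++ (b :: l2 ++ (c :: l3 ++ (d :: l4 ++ l0)))) := by
      have : Cyc G (l0 ++ (a :: t)) := e ▸ hl
      have := this.rotate
      rw [e', e'', e3] at this
      simpa using this
    clear hl hb1 hc1 hd1 hc2 hd2 hd3 ht ht' ht'' h1 h2 h3
    obtain ⟨n, hch, hcy⟩ := hl'
    rw [List.isChain_append, List.isChain_append, List.isChain_append] at hch
    obtain ⟨c1, ⟨c2, ⟨c3, c4, f3⟩, f2⟩, f1⟩ := hch
    have last : ∀ (x : V) (l : List V), ∃ z, z ∈ x :: l ∧ (x :: l).getLast? = some z := fun x l =>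
      ⟨_, List.getLast_mem _, List.getLast?_eq_some_getLast (by simp)⟩
    obtain ⟨z1, hz1, hz1'⟩ := last a l1
    obtain ⟨z2, hz2, hz2'⟩ := last b l2
    obtain ⟨z3, hz3, hz3'⟩ := last c l3
    obtain ⟨z4, hz4, hz4'⟩ := last d (l4 ++ l0)
    simp only [List.nodup_append] at n
    obtain ⟨-, ⟨-, ⟨-, -, n3⟩, n2⟩, n1⟩ := n
    have d1 : ∀ {l l' l'' : List V}, (∀ a ∈ l, ∀ b ∈ l'', a ≠ b) → (∀ x ∈ l', x ∈ l'') →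
        Disjoint {x | x ∈ l} {x | x ∈ l'} := by
      intro l l' l'' h h'
      rw [Set.disjoint_left]
      intro x hx hx'
      exact h x hx x (h' x hx') rfl
    refine k4_helper hG (chain_conn _ (by simp) c1) (chain_conn _ (by simp) c2)
      (chain_conn _ (by simp) c3) (chain_conn _ (by simp) c4)
      (d1 n1 ?_) (d1 n1 ?_) (d1 n1 ?_) (d1 n2 ?_) (d1 n2 ?_) (d1 n3 fun x hx => hx)
      ?_ ?_ ?_ ?_ ?_ ?_
    · intro x hx; exact List.mem_append_left _ hx
    · intro x hx; exact List.mem_append_right _ (List.mem_append_left _ hx)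
    · intro x hx; exact List.mem_append_right _ (List.mem_append_right _ hx)
    · intro x hx; exact List.mem_append_left _ hx
    · intro x hx; exact List.mem_append_right _ hx
    · exact ⟨z1, hz1, b, by simp, f1 _ hz1' _ (by simp)⟩
    · exact ⟨a, by simp, c, by simp, hac⟩
    · refine ⟨a, by simp, z4, hz4, (hcy z4 ?_ a (by simp)).symm⟩
      rw [List.getLast?_append, List.getLast?_append, List.getLast?_append, List.cons_append, hz4']
      simp
    · exact ⟨z2, hz2, c, by simp, f2 _ hz2' _ (by simp)⟩
    · exact ⟨b, by simp, d, by simp, hbd⟩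
    · exact ⟨z3, hz3, d, by simp, f3 _ hz3' _ (by simp)⟩

lemma exists_ncOn (hG : Outerplanar G) : ∀ (n : ℕ) (S : Finset V), S.card = n →
    ∃ p, NCOn G (S : Set V) p := by
  intro n
  induction n using Nat.strong_induction_on with
  | _ n ih =>
  intro S hS
  by_cases hn : n < 3
  · obtain ⟨p, hp⟩ : ∃ p : V → ℕ, Set.InjOn p (S : Set V) :=
      ⟨fun x => if h : x ∈ S then (S.equivFin ⟨x, h⟩ : ℕ) else 0, by
        intro x hx y hy h
        simp only [Finset.mem_coe] at hx hy
        simp only [hx, hy, dif_pos] at h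
        have := S.equivFin.injective (Fin.ext h)
        simpa using this⟩
    refine ⟨p, hp, ?_⟩
    intro a ha b hb c hc d hd _ _ h1 h2 h3
    have hsub : ({a, b, c} : Finset V) ⊆ S := by
      intro x hx
      simp only [Finset.mem_insert, Finset.mem_singleton] at hx
      rcases hx with rfl | rfl | rfl <;> assumption
    have h3 : ({a, b, c} : Finset V).card = 3 := by
      apply Finset.card_eq_three.2
      exact ⟨a, b, c, by rintro rfl; omega, by rintro rfl; omega, by rintro rfl; omega, rfl⟩
    have := Finset.card_le_card hsub
    omega
  · by_cases H2 : ∀ v ∈ S, ∀ D ⊆ S, v ∉ D → D.Nonempty → (∃ y ∈ S, y ∉ D ∧ y ≠ v) →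
      ∃ x ∈ D, ∃ y ∈ S, y ∉ D ∧ y ≠ v ∧ G.Adj x y
    · obtain ⟨u, v, w, hu, hv, hw, huv, huw, hvw⟩ : ∃ u v w, u ∈ S ∧ v ∈ S ∧ w ∈ S ∧
          u ≠ v ∧ u ≠ w ∧ v ≠ w := by
        obtain ⟨u, v, w, h⟩ := Finset.two_lt_card_iff.1 (show 2 < S.card by omega)
        exact ⟨u, v, w, h⟩
      obtain ⟨x, hx, y, hy, hyD, hyv, hxy⟩ := H2 v hv {u} (by simpa using hu)
        (by simpa using huv.symm) ⟨u, by simp⟩ ⟨w, hw, by simpa using huw.symm, hvw.symm⟩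
      obtain rfl : x = u := by simpa using hx
      obtain ⟨l, hl, hlS⟩ := exists_ham hG H2 _ [x, y]
        ⟨by simpa using hxy.ne, by simpa using hxy, by
          intro a ha b hb
          simp at ha hb; subst ha hb; exact hxy.symm⟩ (by simp) (by simp [hu, hy]) le_rfl
      have := hl.nc hG
      have e : {x | x ∈ l} = (S : Set V) := by ext x; simpa using hlS x
      rw [e] at this
      exact ⟨_, this⟩
    · push Not at H2
      obtain ⟨v, hv, D, hDS, hvD, hDn, ⟨y, hyS, hyD, hyv⟩, hno⟩ := H2
      have c1 : (insert v D).card < n := by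
        rw [← hS]
        apply Finset.card_lt_card
        refine ⟨Finset.insert_subset hv hDS, fun h => ?_⟩
        have := h hyS
        simp [hyD, hyv] at this
      have c2 : (S \ D).card < n := by
        rw [← hS]
        obtain ⟨x, hx⟩ := hDn
        apply Finset.card_lt_card
        refine ⟨Finset.sdiff_subset, fun h => ?_⟩
        have := h (hDS hx)
        simp [hx] at this
      obtain ⟨p, hp⟩ := ih _ c1 _ rfl
      obtain ⟨q, hq⟩ := ih _ c2 _ rfl
      have e : (S : Set V) = ((insert v D : Finset V) : Set V) ∪ ((S \ D : Finset V) : Set V) := by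
        ext x
        simp only [Finset.mem_coe, Set.mem_union, Finset.mem_insert, Finset.mem_sdiff]
        constructor
        · intro h; by_cases hx : x ∈ D <;> simp [h, hx]
        · rintro ((rfl | h) | h)
          · exact hv
          · exact hDS h
          · exact h.1
      rw [e]
      refine hp.glue (Finset.finite_toSet _) (Finset.finite_toSet _) hq (v := v) (by simp)
        (by simp [hv, hvD]) ?_ ?_
      · intro x hx hx'
        simp only [Finset.mem_coe, Finset.mem_insert, Finset.mem_sdiff] at hx hx'
        tauto
      · intro x hx z hz hxz
        simp only [Finset.mem_coe, Finset.mem_insert, Finset.mem_sdiff] at hx hz ⊢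
        rcases hx with rfl | hx
        · left; exact ⟨hv, hvD⟩
        · right
          by_contra hcon
          exact hno x hx z hz.1 hz.2 (fun h => hcon (Or.inl h)) hxz

lemma exists_nc [Fintype V] (hG : Outerplanar G) : ∃ p, NC G p := by
  obtain ⟨p, hp⟩ := exists_ncOn hG _ Finset.univ rfl
  exact ⟨p, nc_iff.2 (by simpa using hp)⟩

end Part3


section Part4
variable {V W : Type*} {G : SimpleGraph V} {H : SimpleGraph W}

/-- A triangulated polygon side of depth at most `d` behind the edge `u v`. -/
inductive Thin (H : SimpleGraph W) : ℕ → W → W → Set W → Prop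
  | edge (d : ℕ) (u v : W) (h : u ≠ v) : Thin H d u v {u, v}
  | tri (d : ℕ) (u w v : W) (A B : Set W) (hA : Thin H d u w A) (hB : Thin H d w v B)
      (hAB : ∀ x ∈ A, x ∈ B → x = w)
      (hE : ∀ x ∈ A, ∀ y ∈ B, H.Adj x y → x ∈ B ∨ y ∈ A ∨ (x = u ∧ y = v)) :
      Thin H (d + 1) u v (A ∪ B)

/-- A triangulated polygon side of full depth `d` behind the edge `u v`. -/
inductive Full (G : SimpleGraph V) : ℕ → V → V → Set V → Prop
  | base (u v : V) (A : Set V) (h : G.Adj u v) (hu : u ∈ A) (hv : v ∈ A) : Full G 0 u v A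
  | tri (d : ℕ) (u w v : V) (A B : Set V) (h : G.Adj u v) (hA : Full G d u w A)
      (hB : Full G d w v B) (hAB : ∀ x ∈ A, x ∈ B → x = w) : Full G (d + 1) u v (A ∪ B)

lemma Thin.mem {d : ℕ} {u v : W} {A : Set W} (h : Thin H d u v A) : u ∈ A ∧ v ∈ A := by
  induction h with
  | edge => simp
  | tri d u w v A B hA hB hAB hE ihA ihB => exact ⟨Or.inl ihA.1, Or.inr ihB.2⟩

lemma Thin.symm {d : ℕ} {u v : W} {A : Set W} (h : Thin H d u v A) : Thin H d v u A := by
  induction h with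
  | edge d u v h => rw [Set.pair_comm]; exact .edge _ _ _ h.symm
  | tri d u w v A B hA hB hAB hE ihA ihB =>
    rw [Set.union_comm]
    refine .tri _ _ _ _ _ _ ihB ihA (fun x hx hx' => hAB x hx' hx) ?_
    intro x hx y hy hxy
    have := hE y hy x hx hxy.symm
    tauto

lemma Full.mem {d : ℕ} {u v : V} {A : Set V} (h : Full G d u v A) :
    G.Adj u v ∧ u ∈ A ∧ v ∈ A := by
  induction h with
  | base u v A h hu hv => exact ⟨h, hu, hv⟩
  | tri d u w v A B h hA hB hAB ihA ihB => exact ⟨h, Or.inl ihA.2.1, Or.inr ihB.2.2⟩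

lemma Full.symm {d : ℕ} {u v : V} {A : Set V} (h : Full G d u v A) : Full G d v u A := by
  induction h with
  | base u v A h hu hv => exact .base _ _ _ h.symm hv hu
  | tri d u w v A B h hA hB hAB ihA ihB =>
    rw [Set.union_comm]
    exact .tri _ _ _ _ _ _ h.symm ihB ihA (fun x hx hx' => hAB x hx' hx)

def Emb (H : SimpleGraph W) (G : SimpleGraph V) (A : Set W) (A' : Set V) (φ : W → V) : Prop :=
  (∀ x ∈ A, φ x ∈ A') ∧ Set.InjOn φ A ∧ ∀ x ∈ A, ∀ y ∈ A, H.Adj x y → G.Adj (φ x) (φ y)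

lemma Thin.embed {d : ℕ} {u v : W} {A : Set W} (h : Thin H d u v A) :
    ∀ {u' v' : V} {A' : Set V}, Full G d u' v' A' →
      ∃ φ : W → V, Emb H G A A' φ ∧ φ u = u' ∧ φ v = v' := by
  induction h with
  | edge d u v h =>
    intro u' v' A' hF
    obtain ⟨ha, hu, hv⟩ := hF.mem
    have e1 : (fun x => if x = u then u' else v') u = u' := by simp
    have e2 : (fun x => if x = u then u' else v') v = v' := by simp [h.symm]
    refine ⟨fun x => if x = u then u' else v', ⟨?_, ?_, ?_⟩, e1, e2⟩
    · rintro x (rfl | rfl)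
      · rw [e1]; exact hu
      · rw [e2]; exact hv
    · rintro x (rfl | rfl) y (rfl | rfl) hxy
      · rfl
      · rw [e1, e2] at hxy; exact absurd hxy ha.ne
      · rw [e1, e2] at hxy; exact absurd hxy.symm ha.ne
      · rfl
    · rintro x (rfl | rfl) y (rfl | rfl) hxy
      · exact absurd rfl hxy.ne
      · rw [e1, e2]; exact ha
      · rw [e1, e2]; exact ha.symm
      · exact absurd rfl hxy.ne
  | tri d u w v A B hA hB hAB hE ihA ihB =>
    intro u' v' A' hF
    rcases hF with _ | ⟨_, _, w', _, A', B', hadj, hA', hB', hAB'⟩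
    obtain ⟨f, ⟨f1, f2, f3⟩, fu, fw⟩ := ihA hA'
    obtain ⟨g, ⟨g1, g2, g3⟩, gw, gv⟩ := ihB hB'
    set φ : W → V := fun x => if x ∈ A then f x else g x with hφ
    have eA : ∀ x ∈ A, φ x = f x := fun x hx => by simp [hφ, hx]
    have eB : ∀ x ∈ B, φ x = g x := fun x hx => by
      by_cases h : x ∈ A
      · rw [eA x h, hAB x h hx, fw, gw]
      · simp [hφ, h]
    have key : ∀ x ∈ A, ∀ y ∈ B, φ x = φ y → x = y := by
      intro x hx y hy h
      have h' := h
      rw [eA x hx, eB y hy] at h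
      have hw : f x = w' := hAB' _ (f1 x hx) (h ▸ g1 y hy)
      have e1 : x = w := f2 hx hA.mem.2 (hw.trans fw.symm)
      have e2 : y = w := g2 hy hB.mem.1 ((h.symm.trans hw).trans gw.symm)
      rw [e1, e2]
    have pu : φ u = u' := by rw [eA u hA.mem.1, fu]
    have pv : φ v = v' := by rw [eB v hB.mem.2, gv]
    have key2 : ∀ x ∈ A, ∀ y ∈ B, H.Adj x y → G.Adj (φ x) (φ y) := by
      intro x hx y hy hxy
      rcases hE x hx y hy hxy with h | h | ⟨rfl, rfl⟩
      · rw [eB x h, eB y hy]; exact g3 x h y hy hxy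
      · rw [eA x hx, eA y h]; exact f3 x hx y h hxy
      · rw [pu, pv]; exact hadj
    refine ⟨φ, ⟨?_, ?_, ?_⟩, pu, pv⟩
    · rintro x (hx | hx)
      · rw [eA x hx]; exact Or.inl (f1 x hx)
      · rw [eB x hx]; exact Or.inr (g1 x hx)
    · rintro x (hx | hx) y (hy | hy) h
      · rw [eA x hx, eA y hy] at h; exact f2 hx hy h
      · exact key x hx y hy h
      · exact (key y hy x hx h.symm).symm
      · rw [eB x hx, eB y hy] at h; exact g2 hx hy h
    · rintro x (hx | hx) y (hy | hy) hxy
      · rw [eA x hx, eA y hy]; exact f3 x hx y hy hxy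
      · exact key2 x hx y hy hxy
      · exact (key2 y hy x hx hxy.symm).symm
      · rw [eB x hx, eB y hy]; exact g3 x hx y hy hxy

/-- Decomposition of a graph in three sides around a central triangle. -/
def Frame (G : SimpleGraph V) (P : V → V → Set V → Prop) (x y z : V) : Prop :=
  ∃ A B C : Set V, P x y A ∧ P y z B ∧ P x z C ∧ (∀ v ∈ A, v ∈ B → v = y) ∧
    (∀ v ∈ B, v ∈ C → v = z) ∧ (∀ v ∈ A, v ∈ C → v = x) ∧ (∀ v, v ∈ A ∨ v ∈ B ∨ v ∈ C) ∧
    ∀ a b, G.Adj a b → (a ∈ A ∧ b ∈ A) ∨ (a ∈ B ∧ b ∈ B) ∨ (a ∈ C ∧ b ∈ C)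

lemma Frame.swap12 {P : V → V → Set V → Prop} (hP : ∀ u v A, P u v A → P v u A) {x y z : V}
    (h : Frame G P x y z) : Frame G P y x z := by
  obtain ⟨A, B, C, a, b, c, d, e, f, g, i⟩ := h
  refine ⟨A, C, B, hP _ _ _ a, c, b, f, fun v h h' => e v h' h, d, ?_, ?_⟩
  · intro v; have := g v; tauto
  · intro u v h; have := i u v h; tauto

lemma Frame.swap23 {P : V → V → Set V → Prop} (hP : ∀ u v A, P u v A → P v u A) {x y z : V}
    (h : Frame G P x y z) : Frame G P x z y := by
  obtain ⟨A, B, C, a, b, c, d, e, f, g, i⟩ := h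
  refine ⟨C, B, A, c, hP _ _ _ b, a, fun v h h' => e v h' h, fun v h h' => d v h' h,
    fun v h h' => f v h' h, ?_, ?_⟩
  · intro v; have := g v; tauto
  · intro u v h; have := i u v h; tauto

lemma frame_sorted [Finite V] {P : V → V → Set V → Prop} (hP : ∀ u v A, P u v A → P v u A)
    {p : V → ℕ} (hp : NC G p) {x y z : V} (hxy : G.Adj x y) (hyz : G.Adj y z) (hxz : G.Adj x z)
    (hmain : ∀ q, NC G q → ∀ u v w, ({u, v, w} : Finset V) = {x, y, z} → G.Adj u v →
      G.Adj u w → G.Adj v w → q u < q v → (q w < q u ∨ q v < q w) →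
        P u v {a | q u ≤ q a ∧ q a ≤ q v})
    (h1 : p x < p y) (h2 : p y < p z) : Frame G P x y z := by
  obtain ⟨N, hN⟩ := (Set.finite_range p).bddAbove
  have hN' : ∀ a, p a < N + 1 := fun a => Nat.lt_succ_of_le (hN ⟨a, rfl⟩)
  have hq : NC G (rot p (N + 1) (p z)) := nc_iff.2 ((nc_iff.1 hp).rot (fun a _ => hN' a) _)
  have qz : rot p (N + 1) (p z) z = p z := by simp [rot]
  have qx : rot p (N + 1) (p z) x = p x + (N + 1) := by simp [rot]; omega
  have qy : rot p (N + 1) (p z) y = p y + (N + 1) := by simp [rot]; omega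
  have hz := hN' z
  have hinj : ∀ a b, p a = p b → a = b := fun a b h => hp.1 h
  have hC : ∀ a, (rot p (N + 1) (p z) z ≤ rot p (N + 1) (p z) a ∧
      rot p (N + 1) (p z) a ≤ rot p (N + 1) (p z) x) ↔ (p z ≤ p a ∨ p a ≤ p x) := by
    intro a
    have := hN' a
    rw [qz, qx]
    simp only [rot]
    split_ifs <;> omega
  refine ⟨{a | p x ≤ p a ∧ p a ≤ p y}, {a | p y ≤ p a ∧ p a ≤ p z}, {a | p z ≤ p a ∨ p a ≤ p x},
    hmain p hp x y z rfl hxy hxz hyz h1 (Or.inr h2),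
    hmain p hp y z x (by grind) hyz hxy.symm hxz.symm h2 (Or.inl h1), ?_, ?_, ?_, ?_, ?_, ?_⟩
  · have := hmain _ hq z x y (by grind) hxz.symm hyz.symm hxy (by omega) (Or.inr (by omega))
    apply hP
    simpa only [hC] using this
  · rintro v ⟨a, b⟩ ⟨c, d⟩; apply hinj; omega
  · rintro v ⟨a, b⟩ (c | c)
    · apply hinj; omega
    · omega
  · rintro v ⟨a, b⟩ (c | c)
    · omega
    · apply hinj; omega
  · intro v
    change (p x ≤ p v ∧ p v ≤ p y) ∨ (p y ≤ p v ∧ p v ≤ p z) ∨ (p z ≤ p v ∨ p v ≤ p x)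
    omega
  · intro a b hab
    change ((p x ≤ p a ∧ p a ≤ p y) ∧ (p x ≤ p b ∧ p b ≤ p y)) ∨
      ((p y ≤ p a ∧ p a ≤ p z) ∧ (p y ≤ p b ∧ p b ≤ p z)) ∨
      ((p z ≤ p a ∨ p a ≤ p x) ∧ (p z ≤ p b ∨ p b ≤ p x))
    have c1 : ∀ u v, G.Adj u v → p x < p u → p u < p y → p x ≤ p v ∧ p v ≤ p y := by
      intro u v huv k1 k2
      by_contra hcon
      rcases lt_or_ge (p v) (p x) with k | k
      · exact hp.2 v x u y huv.symm hxy k k1 k2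
      · exact hp.2 x u y v hxy huv k1 k2 (by omega)
    have c2 : ∀ u v, G.Adj u v → p y < p u → p u < p z → p y ≤ p v ∧ p v ≤ p z := by
      intro u v huv k1 k2
      by_contra hcon
      rcases lt_or_ge (p v) (p y) with k | k
      · exact hp.2 v y u z huv.symm hyz k k1 k2
      · exact hp.2 y u z v hyz huv k1 k2 (by omega)
    have c3 : ∀ u v, G.Adj u v → (p z < p u ∨ p u < p x) → (p z ≤ p v ∨ p v ≤ p x) := by
      intro u v huv k1
      by_contra hcon
      rcases k1 with k | k
      · exact hp.2 x v z u hxz huv.symm (by omega) (by omega) k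
      · exact hp.2 u x v z huv hxz k (by omega) (by omega)
    have d1 := c1 a b hab
    have d2 := c2 a b hab
    have d3 := c3 a b hab
    have d4 := c1 b a hab.symm
    have d5 := c2 b a hab.symm
    have d6 := c3 b a hab.symm
    clear c1 c2 c3
    by_cases k1 : p x < p a ∧ p a < p y
    · have := d1 k1.1 k1.2; omega
    by_cases k2 : p y < p a ∧ p a < p z
    · have := d2 k2.1 k2.2; omega
    by_cases k3 : p z < p a ∨ p a < p x
    · have := d3 k3; omega
    by_cases k1 : p x < p b ∧ p b < p y
    · have := d4 k1.1 k1.2; omega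
    by_cases k2 : p y < p b ∧ p b < p z
    · have := d5 k2.1 k2.2; omega
    by_cases k3 : p z < p b ∨ p b < p x
    · have := d6 k3; omega
    omega

lemma frame_exists [Finite V] {P : V → V → Set V → Prop} (hP : ∀ u v A, P u v A → P v u A)
    {p : V → ℕ} (hp : NC G p) {x y z : V} (hxy : G.Adj x y) (hyz : G.Adj y z) (hxz : G.Adj x z)
    (hmain : ∀ q, NC G q → ∀ u v w, ({u, v, w} : Finset V) = {x, y, z} → G.Adj u v →
      G.Adj u w → G.Adj v w → q u < q v → (q w < q u ∨ q v < q w) →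
        P u v {a | q u ≤ q a ∧ q a ≤ q v}) : Frame G P x y z := by
  have n1 : p x ≠ p y := fun h => hxy.ne (hp.1 h)
  have n2 : p y ≠ p z := fun h => hyz.ne (hp.1 h)
  have n3 : p x ≠ p z := fun h => hxz.ne (hp.1 h)
  have e1 : ({x, z, y} : Finset V) = {x, y, z} := by grind
  have e2 : ({y, x, z} : Finset V) = {x, y, z} := by grind
  have e3 : ({y, z, x} : Finset V) = {x, y, z} := by grind
  have e4 : ({z, x, y} : Finset V) = {x, y, z} := by grind
  have e5 : ({z, y, x} : Finset V) = {x, y, z} := by grind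
  rcases lt_or_gt_of_ne n1 with m1 | m1 <;> rcases lt_or_gt_of_ne n2 with m2 | m2 <;>
    rcases lt_or_gt_of_ne n3 with m3 | m3
  · exact frame_sorted hP hp hxy hyz hxz hmain m1 m2
  · omega
  · exact (frame_sorted hP hp hxz hyz.symm hxy (e1 ▸ hmain) m3 m2).swap23 hP
  · exact ((frame_sorted hP hp hxz.symm hxy hyz.symm (e4 ▸ hmain) m3 m1).swap12 hP).swap23 hP
  · exact (frame_sorted hP hp hxy.symm hxz hyz (e2 ▸ hmain) m1 m3).swap12 hP
  · exact ((frame_sorted hP hp hyz hxz.symm hxy.symm (e3 ▸ hmain) m2 m3).swap23 hP).swap12 hP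
  · omega
  · exact (((frame_sorted hP hp hyz.symm hxy.symm hxz.symm (e5 ▸ hmain) m2 m1).swap12
      hP).swap23 hP).swap12 hP

lemma frame_embed {h : ℕ} {x1 x2 x3 : W} {y1 y2 y3 : V} (hH : Frame H (Thin H h) x1 x2 x3)
    (hG : Frame G (Full G h) y1 y2 y3) :
    ∃ φ : W → V, Function.Injective φ ∧ (∀ ⦃a b : W⦄, H.Adj a b → G.Adj (φ a) (φ b)) ∧
      φ x1 = y1 ∧ φ x2 = y2 ∧ φ x3 = y3 := by
  obtain ⟨A, B, C, tA, tB, tC, iAB, iBC, iAC, cov, hE⟩ := hH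
  obtain ⟨A', B', C', tA', tB', tC', iAB', iBC', iAC', -, -⟩ := hG
  obtain ⟨f, ⟨f1, f2, f3⟩, fx, fy⟩ := tA.embed tA'
  obtain ⟨g, ⟨g1, g2, g3⟩, gx, gy⟩ := tB.embed tB'
  obtain ⟨k, ⟨k1, k2, k3⟩, kx, ky⟩ := tC.embed tC'
  set φ : W → V := fun x => if x ∈ A then f x else if x ∈ B then g x else k x with hφ
  have eA : ∀ x ∈ A, φ x = f x := fun x hx => by simp [hφ, hx]
  have eB : ∀ x ∈ B, φ x = g x := fun x hx => by
    by_cases h : x ∈ A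
    · rw [eA x h, iAB x h hx, fy, gx]
    · simp [hφ, h, hx]
  have eC : ∀ x ∈ C, φ x = k x := fun x hx => by
    by_cases h : x ∈ A
    · rw [eA x h, iAC x h hx, fx, kx]
    · by_cases h' : x ∈ B
      · rw [eB x h', iBC x h' hx, gy, ky]
      · simp [hφ, h, h']
  have kAB : ∀ x ∈ A, ∀ y ∈ B, φ x = φ y → x = y := by
    intro x hx y hy h
    rw [eA x hx, eB y hy] at h
    have hw : f x = y2 := iAB' _ (f1 x hx) (h ▸ g1 y hy)
    rw [f2 hx tA.mem.2 (hw.trans fy.symm), g2 hy tB.mem.1 ((h.symm.trans hw).trans gx.symm)]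
  have kBC : ∀ x ∈ B, ∀ y ∈ C, φ x = φ y → x = y := by
    intro x hx y hy h
    rw [eB x hx, eC y hy] at h
    have hw : g x = y3 := iBC' _ (g1 x hx) (h ▸ k1 y hy)
    rw [g2 hx tB.mem.2 (hw.trans gy.symm), k2 hy tC.mem.2 ((h.symm.trans hw).trans ky.symm)]
  have kAC : ∀ x ∈ A, ∀ y ∈ C, φ x = φ y → x = y := by
    intro x hx y hy h
    rw [eA x hx, eC y hy] at h
    have hw : f x = y1 := iAC' _ (f1 x hx) (h ▸ k1 y hy)
    rw [f2 hx tA.mem.1 (hw.trans fx.symm), k2 hy tC.mem.1 ((h.symm.trans hw).trans kx.symm)]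
  refine ⟨φ, ?_, ?_, ?_, ?_, ?_⟩
  · intro x y h
    rcases cov x with hx | hx | hx <;> rcases cov y with hy | hy | hy
    · rw [eA x hx, eA y hy] at h; exact f2 hx hy h
    · exact kAB x hx y hy h
    · exact kAC x hx y hy h
    · exact (kAB y hy x hx h.symm).symm
    · rw [eB x hx, eB y hy] at h; exact g2 hx hy h
    · exact kBC x hx y hy h
    · exact (kAC y hy x hx h.symm).symm
    · exact (kBC y hy x hx h.symm).symm
    · rw [eC x hx, eC y hy] at h; exact k2 hx hy h
  · intro x y h
    rcases hE x y h with ⟨hx, hy⟩ | ⟨hx, hy⟩ | ⟨hx, hy⟩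
    · rw [eA x hx, eA y hy]; exact f3 x hx y hy h
    · rw [eB x hx, eB y hy]; exact g3 x hx y hy h
    · rw [eC x hx, eC y hy]; exact k3 x hx y hy h
  · rw [eA _ tA.mem.1, fx]
  · rw [eA _ tA.mem.2, fy]
  · rw [eB _ tB.mem.2, gy]

end Part4


section Part5
variable {V : Type*} {H : SimpleGraph V} {p : V → ℕ}

lemma add_edge_adj (hH : MaximalOuterplanar H) (hp : NC H p) {a b : V} (hab : p a < p b)
    (hno : ∀ c d, H.Adj c d → p a < p c → p c < p b → p a ≤ p d ∧ p d ≤ p b) : H.Adj a b := by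
  by_contra hnot
  have hne : a ≠ b := by rintro rfl; omega
  refine hH.2 (H ⊔ SimpleGraph.edge a b) ?_ ?_
  · exact H.lt_sup_edge _ _ hne hnot
  · refine NC.outerplanar (p := p) ⟨hp.1, ?_⟩
    intro x y z w h1 h2 l1 l2 l3
    rw [sup_adj, edge_adj] at h1 h2
    rcases h1 with h1 | ⟨h1 | h1, -⟩ <;> rcases h2 with h2 | ⟨h2 | h2, -⟩
    · exact hp.2 x y z w h1 h2 l1 l2 l3
    · obtain ⟨rfl, rfl⟩ := h2
      have := hno z x h1.symm l2 l3
      omega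
    · obtain ⟨rfl, rfl⟩ := h2
      omega
    · obtain ⟨rfl, rfl⟩ := h1
      have := hno y w h2 l1 l2
      omega
    · obtain ⟨rfl, rfl⟩ := h1
      obtain ⟨rfl, rfl⟩ := h2
      omega
    · obtain ⟨rfl, rfl⟩ := h1
      obtain ⟨rfl, rfl⟩ := h2
      omega
    · obtain ⟨rfl, rfl⟩ := h1
      omega
    · obtain ⟨rfl, rfl⟩ := h1
      obtain ⟨rfl, rfl⟩ := h2
      omega
    · obtain ⟨rfl, rfl⟩ := h1
      obtain ⟨rfl, rfl⟩ := h2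
      omega

lemma inside_tri [Finite V] (hH : MaximalOuterplanar H) (hp : NC H p) {u v x : V}
    (huv : H.Adj u v) (hux : p u < p x) (hxv : p x < p v) :
    ∃ w, p u < p w ∧ p w < p v ∧ H.Adj u w ∧ H.Adj w v := by
  obtain ⟨y, hy, hymin⟩ := Set.exists_min_image {y | p u < p y} p (Set.toFinite _) ⟨x, hux⟩
  simp only [Set.mem_ofPred_eq] at hy hymin
  have hyx := hymin x hux
  have huy : H.Adj u y := add_edge_adj hH hp hy (by
    intro c d _ h1 h2
    have := hymin c h1
    omega)
  obtain ⟨w, hw, hwmax⟩ := Set.exists_max_image {w | H.Adj u w ∧ p u < p w ∧ p w < p v} p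
    (Set.toFinite _) ⟨y, huy, hy, by omega⟩
  simp only [Set.mem_ofPred_eq] at hw hwmax
  obtain ⟨h1, h2, h3⟩ := hw
  refine ⟨w, h2, h3, h1, add_edge_adj hH hp h3 ?_⟩
  intro c d hcd l1 l2
  by_contra hcon
  by_cases hdv : p v < p d
  · exact hp.2 u c v d huv hcd (by omega) l2 hdv
  have hdw : p d < p w := by omega
  by_cases hdu : p d < p u
  · exact hp.2 d u c v hcd.symm huv hdu (by omega) l2
  by_cases hdu' : p d = p u
  · obtain rfl := hp.1 hdu'
    have := hwmax c ⟨hcd.symm, by omega, l2⟩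
    omega
  · exact hp.2 u d w c h1 hcd.symm (by omega) hdw l1

/-- No three vertices are adjacent to both `a` and `b`; ordered form: at most one on each side. -/
lemma same_side (hp : NC H p) {a b c d : V} (hab : p a < p b) (hac : H.Adj a c)
    (hbc : H.Adj b c) (had : H.Adj a d) (hbd : H.Adj b d)
    (hside : (p a < p c ∧ p c < p b) ↔ (p a < p d ∧ p d < p b)) : c = d := by
  have e1 : p a ≠ p c := fun h => hac.ne (hp.1 h)
  have e2 : p b ≠ p c := fun h => hbc.ne (hp.1 h)
  have e3 : p a ≠ p d := fun h => had.ne (hp.1 h)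
  have e4 : p b ≠ p d := fun h => hbd.ne (hp.1 h)
  have h2 := hp.2
  by_contra hcd
  have e5 : p c ≠ p d := fun h => hcd (hp.1 h)
  have key : ∀ a b c d, H.Adj a c → H.Adj b d → ¬ (p a < p b ∧ p b < p c ∧ p c < p d) :=
    fun a b c d h1 h3 h => h2 a b c d h1 h3 h.1 h.2.1 h.2.2
  have t1 := key a c d b had hbc.symm
  have t2 := key a d c b hac hbd.symm
  have s1 := key a b c d hac hbd
  have s2 := key a b d c had hbc
  have s4 := key c d a b hac.symm hbd.symm
  have s5 := key d c a b had.symm hbc.symm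
  have s6 := key c a b d hbc.symm had
  have s7 := key d a b c hbd.symm hac
  omega

lemma book (hp : NC H p) {a b c d e : V} (hab : a ≠ b) (hac : H.Adj a c)
    (hbc : H.Adj b c) (had : H.Adj a d) (hbd : H.Adj b d) (hae : H.Adj a e) (hbe : H.Adj b e)
    (h1 : c ≠ d) (h2 : c ≠ e) : d = e := by
  rcases lt_or_gt_of_ne (fun h => hab (hp.1 h) : p a ≠ p b) with h | h
  · by_contra h3
    have q1 := mt (same_side hp h hac hbc had hbd) h1
    have q2 := mt (same_side hp h hac hbc hae hbe) h2
    have q3 := mt (same_side hp h had hbd hae hbe) h3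
    tauto
  · by_contra h3
    have q1 := mt (same_side hp h hbc hac hbd had) h1
    have q2 := mt (same_side hp h hbc hac hbe hae) h2
    have q3 := mt (same_side hp h hbd had hbe hae) h3
    tauto

lemma tri_mem {s : Finset V} (hs : H.IsNClique 3 s) {u v z : V} (hu : u ∈ s) (hv : v ∈ s)
    (hz : z ∈ s) (huv : u ≠ v) (huz : u ≠ z) (hvz : v ≠ z) :
    (∀ x, x ∈ s ↔ (x = u ∨ x = v ∨ x = z)) ∧ H.Adj u v ∧ H.Adj u z ∧ H.Adj v z := by
  have hsub : ({u, v, z} : Finset V) ⊆ s := by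
    intro x hx
    simp only [Finset.mem_insert, Finset.mem_singleton] at hx
    rcases hx with rfl | rfl | rfl <;> assumption
  have hc : ({u, v, z} : Finset V).card = 3 := by
    rw [Finset.card_eq_three]; exact ⟨u, v, z, huv, huz, hvz, rfl⟩
  have heq := Finset.eq_of_subset_of_card_le hsub (by rw [hc, hs.card_eq])
  refine ⟨fun x => by rw [← heq]; simp, hs.isClique hu hv huv, hs.isClique hu hz huz,
    hs.isClique hv hz hvz⟩

lemma tri_third {s : Finset V} (hs : H.IsNClique 3 s) {u v : V} (hu : u ∈ s) (hv : v ∈ s)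
    (huv : u ≠ v) : ∃ z ∈ s, z ≠ u ∧ z ≠ v ∧
    (∀ x, x ∈ s ↔ (x = u ∨ x = v ∨ x = z)) ∧ H.Adj u v ∧ H.Adj u z ∧ H.Adj v z := by
  have : ¬ s ⊆ {u, v} := by
    intro h
    have h1 := Finset.card_le_card h
    have h2 := Finset.card_le_two (a := u) (b := v)
    rw [hs.card_eq] at h1
    omega
  obtain ⟨z, hz, hz'⟩ := Finset.not_subset.1 this
  simp only [Finset.mem_insert, Finset.mem_singleton, not_or] at hz'
  exact ⟨z, hz, hz'.1, hz'.2, tri_mem hs hu hv hz huv (Ne.symm hz'.1) (Ne.symm hz'.2)⟩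

lemma dual_adj [DecidableEq V] {s t : {s : Finset V // H.IsNClique 3 s}} :
    (weakDual H).Adj s t ↔ s ≠ t ∧ ∃ a b, a ≠ b ∧ a ∈ s.1 ∧ b ∈ s.1 ∧ a ∈ t.1 ∧ b ∈ t.1 := by
  unfold weakDual
  rw [fromRel_adj, Finset.inter_comm t.1 s.1, or_self]
  refine and_congr_right fun hne => ?_
  constructor
  · intro h
    obtain ⟨a, b, hab, he⟩ := Finset.card_eq_two.1 h
    have ha : a ∈ s.1 ∩ t.1 := by rw [he]; simp
    have hb : b ∈ s.1 ∩ t.1 := by rw [he]; simp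
    rw [Finset.mem_inter] at ha hb
    exact ⟨a, b, hab, ha.1, hb.1, ha.2, hb.2⟩
  · rintro ⟨a, b, hab, h1, h2, h3, h4⟩
    have l1 : 1 < (s.1 ∩ t.1).card := Finset.one_lt_card.2
      ⟨a, Finset.mem_inter.2 ⟨h1, h3⟩, b, Finset.mem_inter.2 ⟨h2, h4⟩, hab⟩
    have l2 : (s.1 ∩ t.1).card ≠ 3 := by
      intro h
      apply hne
      apply Subtype.ext
      have a1 := Finset.eq_of_subset_of_card_le (Finset.inter_subset_left (s₁ := s.1) (s₂ := t.1))
        (by rw [h, s.2.card_eq])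
      have a2 := Finset.eq_of_subset_of_card_le (Finset.inter_subset_right (s₁ := s.1) (s₂ := t.1))
        (by rw [h, t.2.card_eq])
      exact a1.symm.trans a2
    have l3 := Finset.card_le_card (Finset.inter_subset_left (s₁ := s.1) (s₂ := t.1))
    rw [s.2.card_eq] at l3
    omega

/-- The triangle through three pairwise adjacent vertices. -/
lemma tri_make {u v w : V} (h1 : H.Adj u v) (h2 : H.Adj u w) (h3 : H.Adj v w) :
    ∃ s : {s : Finset V // H.IsNClique 3 s}, ∀ x, x ∈ s.1 ↔ (x = u ∨ x = v ∨ x = w) :=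
  ⟨⟨{u, v, w}, is3Clique_triple_iff.2 ⟨h1, h2, h3⟩⟩, by simp⟩

end Part5


section Part6
variable {V : Type*} [DecidableEq V] {H : SimpleGraph V} {p : V → ℕ}

lemma dual_step_eq (hp : NC H p) {u v z : V} (huv : p u < p v)
    {t s t' : {s : Finset V // H.IsNClique 3 s}}
    (hu : u ∈ t.1) (hv : v ∈ t.1) (hz : z ∈ t.1) (hzo : p z < p u ∨ p v < p z)
    (hs : ∀ x ∈ s.1, p u ≤ p x ∧ p x ≤ p v) (ht' : ¬ ∀ x ∈ t'.1, p u ≤ p x ∧ p x ≤ p v)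
    (hadj : (weakDual H).Adj t' s) : t' = t := by
  obtain ⟨-, a, b, hab, ha1, hb1, ha2, hb2⟩ := dual_adj.1 hadj
  have n1 : u ≠ v := by rintro rfl; omega
  have n2 : u ≠ z := by rintro rfl; omega
  have n3 : v ≠ z := by rintro rfl; omega
  obtain ⟨ht, auv, auz, avz⟩ := tri_mem t.2 hu hv hz n1 n2 n3
  obtain ⟨y, hy, hya, hyb, hmem, -, aay, aby⟩ := tri_third t'.2 ha1 hb1 hab
  have hia := hs a ha2
  have hib := hs b hb2
  have hyo : p y < p u ∨ p v < p y := by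
    by_contra hcon
    apply ht'
    intro x hx
    rcases (hmem x).1 hx with rfl | rfl | rfl
    · exact hia
    · exact hib
    · omega
  have key : ∀ c, H.Adj c y → p u ≤ p c → p c ≤ p v → c = u ∨ c = v := by
    intro c hc h1 h2
    by_contra hcon
    rw [not_or] at hcon
    have e1 : p c ≠ p u := fun h => hcon.1 (hp.1 h)
    have e2 : p c ≠ p v := fun h => hcon.2 (hp.1 h)
    rcases hyo with h | h
    · exact hp.2 y u c v hc.symm auv h (by omega) (by omega)
    · exact hp.2 u c v y auv hc (by omega) (by omega) h
  have hyz : H.Adj u y → H.Adj v y → y = z := fun h1 h2 =>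
    same_side hp huv h1 h2 auz avz (by omega)
  apply Subtype.ext
  ext x
  rw [hmem, ht]
  rcases key a aay hia.1 hia.2 with rfl | rfl <;> rcases key b aby hib.1 hib.2 with rfl | rfl
  · exact absurd rfl hab
  · rw [hyz aay aby]
  · rw [hyz aby aay]; tauto
  · exact absurd rfl hab

lemma dual_walk (hp : NC H p) (hT : (weakDual H).Connected) {u v z : V} (huv : p u < p v)
    {t : {s : Finset V // H.IsNClique 3 s}}
    (hu : u ∈ t.1) (hv : v ∈ t.1) (hz : z ∈ t.1) (hzo : p z < p u ∨ p v < p z)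
    {r s : {s : Finset V // H.IsNClique 3 s}} (w : (weakDual H).Walk r s)
    (hs : ∀ x ∈ s.1, p u ≤ p x ∧ p x ≤ p v) (hr : ¬ ∀ x ∈ r.1, p u ≤ p x ∧ p x ≤ p v) :
    (weakDual H).dist r t + 1 ≤ w.length := by
  induction w with
  | nil => exact absurd hs hr
  | @cons a b c hadj w ih =>
    rw [Walk.length_cons]
    by_cases hb : ∀ x ∈ b.1, p u ≤ p x ∧ p x ≤ p v
    · have := dual_step_eq hp huv hu hv hz hzo hb hr hadj
      rw [this, dist_self]
      omega
    · have h1 := ih hs hb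
      have h2 := hT.dist_triangle (u := a) (v := b) (w := t)
      have h3 := dist_eq_one_iff_adj.2 hadj
      omega

lemma thin_side [Finite V] (hH : MaximalOuterplanar H) (hp : NC H p) (hT : (weakDual H).Connected)
    {h : ℕ} {r : {s : Finset V // H.IsNClique 3 s}} (hr : ∀ s, (weakDual H).dist r s ≤ h)
    (d : ℕ) : ∀ (u v z : V) (t : {s : Finset V // H.IsNClique 3 s}), p u < p v →
    u ∈ t.1 → v ∈ t.1 → z ∈ t.1 → (p z < p u ∨ p v < p z) →
    (¬ ∀ x ∈ r.1, p u ≤ p x ∧ p x ≤ p v) → h ≤ (weakDual H).dist r t + d →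
    Thin H d u v {a | p u ≤ p a ∧ p a ≤ p v} := by
  induction d with
  | zero =>
    intro u v z t huv hu hv hz hzo hro hd
    have n1 : u ≠ v := by rintro rfl; omega
    have n2 : u ≠ z := by rintro rfl; omega
    have n3 : v ≠ z := by rintro rfl; omega
    obtain ⟨ht, auv, auz, avz⟩ := tri_mem t.2 hu hv hz n1 n2 n3
    have hempty : ∀ x, ¬ (p u < p x ∧ p x < p v) := by
      rintro x ⟨h1, h2⟩
      obtain ⟨w, w1, w2, w3, w4⟩ := inside_tri hH hp auv h1 h2
      obtain ⟨s, hs⟩ := tri_make auv w3 w4.symm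
      obtain ⟨q, hq⟩ := (hT.exists_walk_length_eq_dist r s)
      have := dual_walk hp hT huv hu hv hz hzo q (by
        intro x hx
        rcases (hs x).1 hx with rfl | rfl | rfl <;> omega) hro
      have := hr s
      omega
    have : {a | p u ≤ p a ∧ p a ≤ p v} = {u, v} := by
      ext a
      have := hempty a
      have e1 : p a = p u ↔ a = u := hp.1.eq_iff
      have e2 : p a = p v ↔ a = v := hp.1.eq_iff
      simp only [Set.mem_ofPred_eq, Set.mem_insert_iff, Set.mem_singleton_iff]
      rw [← e1, ← e2]
      omega
    rw [this]
    exact Thin.edge 0 u v n1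
  | succ d ih =>
    intro u v z t huv hu hv hz hzo hro hd
    have n1 : u ≠ v := by rintro rfl; omega
    have n2 : u ≠ z := by rintro rfl; omega
    have n3 : v ≠ z := by rintro rfl; omega
    obtain ⟨ht, auv, auz, avz⟩ := tri_mem t.2 hu hv hz n1 n2 n3
    by_cases hempty : ∀ x, ¬ (p u < p x ∧ p x < p v)
    · have : {a | p u ≤ p a ∧ p a ≤ p v} = {u, v} := by
        ext a
        have := hempty a
        have e1 : p a = p u ↔ a = u := hp.1.eq_iff
        have e2 : p a = p v ↔ a = v := hp.1.eq_iff
        simp only [Set.mem_ofPred_eq, Set.mem_insert_iff, Set.mem_singleton_iff]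
        rw [← e1, ← e2]
        omega
      rw [this]
      exact Thin.edge _ u v n1
    · push Not at hempty
      obtain ⟨x, h1, h2⟩ := hempty
      obtain ⟨w, w1, w2, w3, w4⟩ := inside_tri hH hp auv h1 h2
      obtain ⟨s, hs⟩ := tri_make auv w3 w4.symm
      obtain ⟨q, hq⟩ := (hT.exists_walk_length_eq_dist r s)
      have hst := dual_walk hp hT huv hu hv hz hzo q (by
        intro x hx
        rcases (hs x).1 hx with rfl | rfl | rfl <;> omega) hro
      have A1 := ih u w v s w1 ((hs u).2 (by simp)) ((hs w).2 (by simp)) ((hs v).2 (by simp))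
        (Or.inr w2) (fun hc => hro fun x hx => by have := hc x hx; omega) (by omega)
      have A2 := ih w v u s w2 ((hs w).2 (by simp)) ((hs v).2 (by simp)) ((hs u).2 (by simp))
        (Or.inl w1) (fun hc => hro fun x hx => by have := hc x hx; omega) (by omega)
      have hU : {a | p u ≤ p a ∧ p a ≤ p v} =
          {a | p u ≤ p a ∧ p a ≤ p w} ∪ {a | p w ≤ p a ∧ p a ≤ p v} := by
        ext a
        simp only [Set.mem_ofPred_eq, Set.mem_union]
        omega
      rw [hU]
      refine Thin.tri d u w v _ _ A1 A2 ?_ ?_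
      · intro x hx hx'
        simp only [Set.mem_ofPred_eq] at hx hx'
        exact hp.1 (by omega)
      · intro x hx y hy hxy
        simp only [Set.mem_ofPred_eq] at hx hy ⊢
        have e1 : p x = p u ↔ x = u := hp.1.eq_iff
        have e2 : p y = p v ↔ y = v := hp.1.eq_iff
        rw [← e1, ← e2]
        by_contra hcon
        by_cases hxu : p x = p u
        · obtain rfl := hp.1 hxu
          exact hp.2 x w y v hxy w4 w1 (by omega) (by omega)
        · exact hp.2 u x w y w3 hxy (by omega) (by omega) (by omega)

lemma dual_other (hp : NC H p) {u v : V} (huv : u ≠ v)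
    {t s s' : {s : Finset V // H.IsNClique 3 s}}
    (hu : u ∈ t.1) (hv : v ∈ t.1) (hu' : u ∈ s.1) (hv' : v ∈ s.1) (hu'' : u ∈ s'.1)
    (hv'' : v ∈ s'.1) (h1 : t ≠ s) (h2 : t ≠ s') : s = s' := by
  obtain ⟨a, -, -, -, ma, -, a1, a2⟩ := tri_third t.2 hu hv huv
  obtain ⟨b, -, -, -, mb, -, b1, b2⟩ := tri_third s.2 hu' hv' huv
  obtain ⟨c, -, -, -, mc, -, c1, c2⟩ := tri_third s'.2 hu'' hv'' huv
  have hbc : b = c := by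
    refine book hp huv a1 a2 b1 b2 c1 c2 ?_ ?_
    · rintro rfl
      exact h1 (Subtype.ext (by ext x; rw [ma, mb]))
    · rintro rfl
      exact h2 (Subtype.ext (by ext x; rw [ma, mc]))
  subst hbc
  exact Subtype.ext (by ext x; rw [mb, mc])

lemma full_nbr (hp : NC H p) {u v z : V} {t : {s : Finset V // H.IsNClique 3 s}}
    (hu : u ∈ t.1) (hv : v ∈ t.1) (hz : z ∈ t.1) (n1 : u ≠ v) (n2 : u ≠ z) (n3 : v ≠ z)
    (hdeg : ((weakDual H).neighborSet t).ncard = 3) :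
    ∃ s, (weakDual H).Adj t s ∧ u ∈ s.1 ∧ v ∈ s.1 := by
  by_contra hcon
  obtain ⟨ht, -⟩ := tri_mem t.2 hu hv hz n1 n2 n3
  obtain ⟨s1, s2, s3, h12, h13, h23, he⟩ := Set.ncard_eq_three.1 hdeg
  have key : ∀ s, (weakDual H).Adj t s → z ∈ s.1 ∧ (u ∈ s.1 ∨ v ∈ s.1) := by
    intro s hs
    have hns : ¬ (u ∈ s.1 ∧ v ∈ s.1) := fun h => hcon ⟨s, hs, h.1, h.2⟩
    obtain ⟨-, a, b, hab, a1, b1, a2, b2⟩ := dual_adj.1 hs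
    rw [ht] at a1 b1
    rcases a1 with rfl | rfl | rfl <;> rcases b1 with rfl | rfl | rfl <;> tauto
  have m : ∀ s, (s = s1 ∨ s = s2 ∨ s = s3) → (weakDual H).Adj t s := by
    intro s hs
    have : s ∈ (weakDual H).neighborSet t := by rw [he]; simpa using hs
    exact this
  have k1 := m s1 (by simp)
  have k2 := m s2 (by simp)
  have k3 := m s3 (by simp)
  have U : ∀ a, a ∈ t.1 → a ≠ z → ∀ s s', (weakDual H).Adj t s → (weakDual H).Adj t s' →
      a ∈ s.1 → a ∈ s'.1 → s = s' := fun a ha haz s s' q q' l l' =>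
    dual_other hp haz ha hz l (key s q).1 l' (key s' q').1 q.ne q'.ne
  have U1 := U u hu n2
  have U2 := U v hv n3
  rcases (key s1 k1).2 with q1 | q1 <;> rcases (key s2 k2).2 with q2 | q2 <;>
    rcases (key s3 k3).2 with q3 | q3
  · exact h12 (U1 _ _ k1 k2 q1 q2)
  · exact h12 (U1 _ _ k1 k2 q1 q2)
  · exact h13 (U1 _ _ k1 k3 q1 q3)
  · exact h23 (U2 _ _ k2 k3 q2 q3)
  · exact h23 (U1 _ _ k2 k3 q2 q3)
  · exact h13 (U2 _ _ k1 k3 q1 q3)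
  · exact h12 (U2 _ _ k1 k2 q1 q2)
  · exact h12 (U2 _ _ k1 k2 q1 q2)

lemma full_side (hp : NC H p) (hT : (weakDual H).Connected)
    {h : ℕ} {r : {s : Finset V // H.IsNClique 3 s}}
    (hdeg : ∀ s, (weakDual H).dist r s < h → ((weakDual H).neighborSet s).ncard = 3)
    (d : ℕ) : ∀ (u v z : V) (t : {s : Finset V // H.IsNClique 3 s}), p u < p v →
    u ∈ t.1 → v ∈ t.1 → z ∈ t.1 → (p z < p u ∨ p v < p z) →
    (weakDual H).dist r t + d ≤ h →
    Full H d u v {a | p u ≤ p a ∧ p a ≤ p v} := by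
  induction d with
  | zero =>
    intro u v z t huv hu hv hz hzo hd
    have n1 : u ≠ v := by rintro rfl; omega
    have n2 : u ≠ z := by rintro rfl; omega
    have n3 : v ≠ z := by rintro rfl; omega
    obtain ⟨ht, auv, auz, avz⟩ := tri_mem t.2 hu hv hz n1 n2 n3
    refine Full.base u v _ auv ?_ ?_ <;> simp only [Set.mem_ofPred_eq] <;> omega
  | succ d ih =>
    intro u v z t huv hu hv hz hzo hd
    have n1 : u ≠ v := by rintro rfl; omega
    have n2 : u ≠ z := by rintro rfl; omega
    have n3 : v ≠ z := by rintro rfl; omega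
    obtain ⟨ht, auv, auz, avz⟩ := tri_mem t.2 hu hv hz n1 n2 n3
    obtain ⟨s, hts, hus, hvs⟩ := full_nbr hp hu hv hz n1 n2 n3 (hdeg t (by omega))
    obtain ⟨w, hws, hwu, hwv, ms, -, auw, avw⟩ := tri_third s.2 hus hvs n1
    have hwz : w ≠ z := by
      rintro rfl
      exact hts.ne (Subtype.ext (by ext x; rw [ms, ht]))
    have hin : p u < p w ∧ p w < p v := by
      by_contra hcon
      exact hwz (same_side hp huv auw avw auz avz (by omega))
    have h2 := hT.dist_triangle (u := r) (v := t) (w := s)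
    have h3 := dist_eq_one_iff_adj.2 hts
    have A1 := ih u w v s hin.1 hus hws hvs (Or.inr hin.2) (by omega)
    have A2 := ih w v u s hin.2 hws hvs hus (Or.inl hin.1) (by omega)
    have hU : {a | p u ≤ p a ∧ p a ≤ p v} =
        {a | p u ≤ p a ∧ p a ≤ p w} ∪ {a | p w ≤ p a ∧ p a ≤ p v} := by
      ext a
      simp only [Set.mem_ofPred_eq, Set.mem_union]
      omega
    rw [hU]
    refine Full.tri d u w v _ _ auv A1 A2 ?_
    intro x hx hx'
    simp only [Set.mem_ofPred_eq] at hx hx'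
    exact hp.1 (by omega)

end Part6

section Center
variable {U : Type*} {T : SimpleGraph U}

lemma tree_closer (hT : T.IsTree) {r v a b : U} (ha : T.Adj v a) (hb : T.Adj v b)
    (da : T.dist r v = T.dist r a + 1) (db : T.dist r v = T.dist r b + 1) : a = b := by
  have key : ∀ c, T.Adj v c → T.dist r v = T.dist r c + 1 →
      ∃ q : T.Walk r v, q.IsPath ∧ q.penultimate = c := by
    intro c hc dc
    obtain ⟨q, hq⟩ := hT.connected.exists_walk_length_eq_dist r c
    refine ⟨q.concat hc.symm, Walk.isPath_of_length_eq_dist _ ?_, ?_⟩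
    · rw [Walk.length_concat, hq, dc]
    · exact Walk.penultimate_concat _ _
  obtain ⟨q1, p1, e1⟩ := key a ha da
  obtain ⟨q2, p2, e2⟩ := key b hb db
  have := hT.existsUnique_path r v |>.unique p1 p2
  rw [← e1, ← e2, this]

lemma tree_further [Finite U] (hT : T.IsTree) {r v : U} (hv : 2 ≤ (T.neighborSet v).ncard) :
    ∃ w, T.Adj v w ∧ T.dist r w = T.dist r v + 1 := by
  obtain ⟨a, ha, b, hb, hab⟩ := (Set.one_lt_ncard (Set.toFinite _)).1 hv
  by_contra! hcon
  have e1 := hcon a ha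
  have e2 := hcon b hb
  have d1 := hT.dist_eq_dist_add_one_of_adj r ha
  have d2 := hT.dist_eq_dist_add_one_of_adj r hb
  exact hab (tree_closer (r := r) hT ha hb (by omega) (by omega))

lemma center_eq [Finite U] (hT : T.IsTree) {h : ℕ} {r r0 : U} (hr : ∀ v, T.dist r v ≤ h)
    (h0 : ∀ v : U, (T.neighborSet v).ncard ≤ 1 → T.dist r0 v = h) : r = r0 := by
  obtain ⟨v, hv, hmax⟩ := Set.exists_max_image {v | T.dist r v = T.dist r r0 + T.dist r0 v}
    (fun v => T.dist r0 v) (Set.toFinite _) ⟨r0, by simp⟩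
  simp only [Set.mem_ofPred_eq] at hv hmax
  by_cases hl : (T.neighborSet v).ncard ≤ 1
  · have h1 := h0 v hl
    have h2 := hr v
    exact hT.connected.dist_eq_zero_iff.1 (by omega)
  · obtain ⟨w, hw, hd⟩ := tree_further hT (r := r) (v := v) (by omega)
    have h1 := hT.connected.dist_triangle (u := r) (v := r0) (w := w)
    have h2 := hT.connected.dist_triangle (u := r0) (v := v) (w := w)
    have h3 := dist_eq_one_iff_adj.2 hw
    have := hmax w (by omega)
    omega

lemma center_deg [Fintype U] {h : ℕ} {r : U} (hT : IsCompleteCubicTree T h)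
    (hr : IsHCenter T h r) (v : U) (hv : T.dist r v < h) : (T.neighborSet v).ncard = 3 := by
  obtain ⟨⟨ht, hc⟩, r0, h0⟩ := hT
  obtain rfl := center_eq ht (fun v => (hr v).2) h0
  by_contra hne
  have : (T.neighborSet v).ncard ≤ 1 := by
    rcases hc with hc | hc
    · have h1 := Set.ncard_le_ncard (Set.subset_univ (T.neighborSet v)) (Set.toFinite _)
      rw [Set.ncard_univ, Nat.card_eq_fintype_card, hc] at h1
      exact h1
    · rcases hc v with h | h <;> omega
  have := h0 v this
  omega

end Center

section Main
variable {V : Type*} [Fintype V] [DecidableEq V] {G : SimpleGraph V}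

lemma root_frame (hG : Outerplanar G) {P : V → V → Set V → Prop}
    (hP : ∀ u v A, P u v A → P v u A)
    (r : {s : Finset V // G.IsNClique 3 s}) {x y z : V}
    (hx : (r : Finset V) = {x, y, z}) (h12 : x ≠ y) (h13 : x ≠ z) (h23 : y ≠ z)
    (hmain : ∀ q, NC G q → ∀ u v w, u ∈ r.1 → v ∈ r.1 → w ∈ r.1 → q u < q v →
      (q w < q u ∨ q v < q w) → P u v {a | q u ≤ q a ∧ q a ≤ q v}) : Frame G P x y z := by
  obtain ⟨p, hp⟩ := exists_nc hG
  obtain ⟨hm, a1, a2, a3⟩ := tri_mem r.2 (u := x) (v := y) (z := z) (by rw [hx]; simp)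
    (by rw [hx]; simp) (by rw [hx]; simp) h12 h13 h23
  refine frame_exists hP hp a1 a3 a2 ?_
  intro q hq u v w he _ _ _ huv hw
  have key : ∀ c, (c = u ∨ c = v ∨ c = w) → c ∈ r.1 := by
    intro c hc
    rw [hm]
    have := Finset.ext_iff.1 he c
    simp only [Finset.mem_insert, Finset.mem_singleton] at this
    exact this.1 hc
  exact hmain q hq u v w (key u (by simp)) (key v (by simp)) (key w (by simp)) huv hw

end Main
/-- Let `G` be the universal outerplanar graph with height `h` (the maximal outerplanar graph
whose weak dual tree is the complete cubic tree with height `h`), with `h`-center `r`, whose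
incident vertices are `y1, y2, y3`. Let `H` be a maximal outerplanar graph on at least three
vertices whose weak dual tree has an `h`-center `r_H`, with incident vertices `x1, x2, x3`.
Then there is a subgraph embedding `φ` of `H` into `G` with `φ xᵢ = yᵢ` for `i ∈ {1,2,3}`. -/
theorem universal_outerplanar_subgraph_embedding
    {V W : Type*} [Fintype V] [DecidableEq V] [Fintype W] [DecidableEq W]
    (h : ℕ) (G : SimpleGraph V) (H : SimpleGraph W)
    (hG : MaximalOuterplanar G) (hGdual : IsCompleteCubicTree (weakDual G) h)
    (r : {s : Finset V // G.IsNClique 3 s}) (hr : IsHCenter (weakDual G) h r)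
    (hH : MaximalOuterplanar H) (hWcard : 3 ≤ Fintype.card W)
    (rH : {s : Finset W // H.IsNClique 3 s}) (hrH : IsHCenter (weakDual H) h rH)
    (x1 x2 x3 : W) (y1 y2 y3 : V)
    (hx : (rH : Finset W) = {x1, x2, x3}) (hy : (r : Finset V) = {y1, y2, y3})
    (hx12 : x1 ≠ x2) (hx13 : x1 ≠ x3) (hx23 : x2 ≠ x3)
    (hy12 : y1 ≠ y2) (hy13 : y1 ≠ y3) (hy23 : y2 ≠ y3) :
    ∃ φ : W → V, Function.Injective φ ∧ (∀ ⦃a b : W⦄, H.Adj a b → G.Adj (φ a) (φ b)) ∧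
      φ x1 = y1 ∧ φ x2 = y2 ∧ φ x3 = y3 := by
  have hTG : (weakDual G).Connected := hGdual.1.1.connected
  have hTH : (weakDual H).Connected :=
    (connected_iff_exists_forall_reachable _).2 ⟨rH, fun v => (hrH v).1⟩
  refine frame_embed (h := h) (root_frame hH.1 (fun u v A hA => hA.symm) rH hx hx12 hx13 hx23 ?_)
    (root_frame hG.1 (fun u v A hA => hA.symm) r hy hy12 hy13 hy23 ?_)
  · intro q hq u v w hu hv hw huv hwo
    exact thin_side hH hq hTH (fun s => (hrH s).2) h u v w rH huv hu hv hw hwo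
      (fun hc => by have := hc w hw; omega) (by omega)
  · intro q hq u v w hu hv hw huv hwo
    exact full_side hq hTG (center_deg hGdual hr) h u v w r huv hu hv hw hwo
      (by rw [dist_self]; omega)
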